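/- arXiv:1904.00272 — 5 statements merged into one kernel-verified Lean document; each statement's English description precedes it below -/
import Mathlib

section
/- Let n ≥ 0 and suppose Σ_{k=0}^∞ w(k)|h^{(n)}(k)|² = ∞. Then the only sequence f ∈ ℓ²_w with D_n f = 0 is f = 0; that is, the kernel of D_n in ℓ²_w is trivial. -/
/-- The difference operator `D_n` on sequences:
`(D_n f)(k) = β(k+n) f(k) − β(k) (μ(k+1)/μ(k)) f(k+1)`. -/
noncomputable def Dn (β μ : ℕ → ℂ) (n : ℕ) (f : ℕ → ℂ) (k : ℕ) : ℂ :=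
  β (k + n) * f k - β k * (μ (k + 1) / μ k) * f (k + 1)

/-- The formal kernel vector `h^{(n)}(k) = (∏_{i=0}^{n-1} β(k+i)) / μ(k)`. -/
noncomputable def hker (β μ : ℕ → ℂ) (n : ℕ) (k : ℕ) : ℂ :=
  (∏ i ∈ Finset.range n, β (k + i)) / μ k

/-- Membership in the weighted space `ℓ²_w`: `Σ_k w(k) |f(k)|² < ∞`. -/
def MemL2 (w : ℕ → ℝ) (f : ℕ → ℂ) : Prop :=
  Summable fun k => w k * ‖f k‖ ^ 2

theorem prod_beta_succ_mul (β : ℕ → ℂ) (n k : ℕ) :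
    (∏ i ∈ Finset.range n, β (k + 1 + i)) * β k =
      (∏ i ∈ Finset.range n, β (k + i)) * β (k + n) := by
  rw [← Finset.prod_range_succ (fun i => β (k + i)), Finset.prod_range_succ']
  simp only [add_assoc, add_zero, add_comm 1]

theorem Dn_hker {β μ : ℕ → ℂ} (hμ : ∀ k, μ k ≠ 0) (n : ℕ) :
    Dn β μ n (hker β μ n) = 0 := by
  funext k
  have h := prod_beta_succ_mul β n k
  have h0 := hμ k
  have h1 := hμ (k + 1)
  simp only [Dn, hker, Pi.zero_apply]
  field_simp
  linear_combination -h

/-- Any two solutions of `D_n f = 0` are proportional. -/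
theorem mul_apply_zero_eq_of_Dn_eq_zero {β μ : ℕ → ℂ} (hβ : ∀ k, β k ≠ 0)
    (hμ : ∀ k, μ k ≠ 0) {n : ℕ} {f g : ℕ → ℂ} (hf : Dn β μ n f = 0) (hg : Dn β μ n g = 0)
    (k : ℕ) : f k * g 0 = f 0 * g k := by
  induction k with
  | zero => rfl
  | succ k ih =>
    have hfk := congrFun hf k
    have hgk := congrFun hg k
    simp only [Dn, Pi.zero_apply] at hfk hgk
    have hc : β k * (μ (k + 1) / μ k) ≠ 0 :=
      mul_ne_zero (hβ k) (div_ne_zero (hμ (k + 1)) (hμ k))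
    apply mul_left_cancel₀ hc
    linear_combination β (k + n) * ih - g 0 * hfk + f 0 * hgk

theorem MemL2.const_mul {w : ℕ → ℝ} {f : ℕ → ℂ} (hf : MemL2 w f) (c : ℂ) :
    MemL2 w fun k => c * f k := by
  refine (Summable.mul_left (‖c‖ ^ 2) hf).congr fun k => ?_
  rw [norm_mul]
  ring

/-- if `Σ_k w(k)|h^{(n)}(k)|² = ∞`, then the only `f ∈ ℓ²_w` with
`D_n f = 0` is `f = 0`, i.e., the kernel of `D_n` in `ℓ²_w` is trivial. -/
theorem statement1 (w : ℕ → ℝ) (hw : ∀ k, 0 < w k)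
    (β μ : ℕ → ℂ) (hβ : ∀ k, β k ≠ 0) (hμ : ∀ k, μ k ≠ 0) (hμ0 : μ 0 = 1)
    (n : ℕ) (hdiv : ¬ MemL2 w (hker β μ n)) :
    ∀ f : ℕ → ℂ, MemL2 w f → Dn β μ n f = 0 → f = 0 := by
  intro f hf hD
  have hprop := mul_apply_zero_eq_of_Dn_eq_zero hβ hμ hD (Dn_hker hμ n)
  have hh0 : hker β μ n 0 ≠ 0 :=
    div_ne_zero (Finset.prod_ne_zero_iff.mpr fun i _ => hβ (0 + i)) (hμ 0)
  by_cases hf0 : f 0 = 0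
  · funext k
    simpa [hf0, hh0] using hprop k
  · refine absurd ?_ hdiv
    have heq : hker β μ n = fun k => hker β μ n 0 / f 0 * f k := by
      funext k
      field_simp
      linear_combination -hprop k
    rw [heq]
    exact hf.const_mul _
end

section
/- Let n ≥ 0 and assume: (i) there is a constant M such that |∏_{i=0}^{m} β(k+i)| ≤ M |∏_{i=0}^{m} β(j+i)| for all k ≤ j and all m ≥ 0; (ii) there is c > 0 with |β(k)| ≥ c(1+k) for all k; (iii) Σ_{k=0}^∞ Σ_{j=0}^∞ (max(j,k)+1)^{−2} |μ(j)/μ(k)|² w(k)/w'(j) < ∞. Then the double series S_n = Σ_{k=0}^∞ Σ_{j=k}^∞ |(∏_{i=0}^{n−1} β(k+i))/(∏_{i=0}^{n} β(j+i))|² |μ(j)/μ(k)|² w(k)/w'(j) is finite; consequently the operator Q_n : ℓ²_{w'} → ℓ²_w defined by (Q_n g)(k) = Σ_{j=k}^∞ (∏_{i=0}^{n−1} β(k+i))/(∏_{i=0}^{n} β(j+i)) · (μ(j)/μ(k)) · g(j) is a Hilbert–Schmidt operator with ‖Q_n‖²_HS = S_n ≤ (M²/c²) Σ_{k=0}^∞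 Σ_{j=k}^∞ (1+j+n)^{−2} |μ(j)/μ(k)|² w(k)/w'(j) < ∞. -/
/-- The integral kernel of the operator `Q_n`:
`K_n(k,j) = (∏_{i=0}^{n-1} β(k+i)) / (∏_{i=0}^{n} β(j+i)) · (μ(j)/μ(k))`. -/
noncomputable def Qker (β μ : ℕ → ℂ) (n : ℕ) (k j : ℕ) : ℂ :=
  (∏ i ∈ Finset.range n, β (k + i)) / (∏ i ∈ Finset.range (n + 1), β (j + i)) *
    (μ j / μ k)

/-- The Hilbert–Schmidt summand of `Q_n : ℓ²_{w'} → ℓ²_w` at `(k,j)` (zero off the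
region `j ≥ k` where the kernel is supported). -/
noncomputable def HSterm (w w' : ℕ → ℝ) (β μ : ℕ → ℂ) (n : ℕ) (p : ℕ × ℕ) : ℝ :=
  if p.1 ≤ p.2 then ‖Qker β μ n p.1 p.2‖ ^ 2 * (w p.1 / w' p.2) else 0

/-- The comparison summand `(1+j+n)^{-2} |μ(j)/μ(k)|² w(k)/w'(j)` on `j ≥ k`. -/
noncomputable def Bterm (w w' : ℕ → ℝ) (μ : ℕ → ℂ) (n : ℕ) (p : ℕ × ℕ) : ℝ :=
  if p.1 ≤ p.2 then ((1 + p.2 + n : ℝ))⁻¹ ^ 2 * ‖μ p.2 / μ p.1‖ ^ 2 * (w p.1 / w' p.2)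
  else 0

/-- A monotonicity estimate on nonempty products of `β` also covers the empty product. -/
theorem norm_prod_range_le {β : ℕ → ℂ} {M : ℝ} (hβ : ∀ k, β k ≠ 0)
    (hM : ∀ k j m : ℕ, k ≤ j →
      ‖∏ i ∈ Finset.range (m + 1), β (k + i)‖ ≤
        M * ‖∏ i ∈ Finset.range (m + 1), β (j + i)‖)
    {k j : ℕ} (hkj : k ≤ j) (n : ℕ) :
    ‖∏ i ∈ Finset.range n, β (k + i)‖ ≤ M * ‖∏ i ∈ Finset.range n, β (j + i)‖ := by
  cases n with
  | zero =>
    have h := hM 0 0 0 le_rfl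
    have h0 : 0 < ‖β 0‖ := norm_pos_iff.mpr (hβ 0)
    simp only [zero_add, Finset.prod_range_one] at h
    simpa using (le_mul_iff_one_le_left h0).mp h
  | succ m => exact hM k j m hkj

/-- Pointwise bound on the kernel of `Q_n` on the region `k ≤ j`. -/
theorem norm_Qker_le {β : ℕ → ℂ} (μ : ℕ → ℂ) {M c : ℝ} (hβ : ∀ k, β k ≠ 0) (hc : 0 < c)
    (hM : ∀ k j m : ℕ, k ≤ j →
      ‖∏ i ∈ Finset.range (m + 1), β (k + i)‖ ≤
        M * ‖∏ i ∈ Finset.range (m + 1), β (j + i)‖)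
    (hβlow : ∀ k : ℕ, c * (1 + k) ≤ ‖β k‖) {k j : ℕ} (hkj : k ≤ j) (n : ℕ) :
    ‖Qker β μ n k j‖ ≤ M / c * (1 + j + n : ℝ)⁻¹ * ‖μ j / μ k‖ := by
  have hprod := norm_prod_range_le hβ hM hkj n
  have hpos : 0 < ‖∏ i ∈ Finset.range n, β (j + i)‖ :=
    norm_pos_iff.mpr (Finset.prod_ne_zero_iff.mpr fun i _ => hβ _)
  have hM0 : 0 ≤ M := nonneg_of_mul_nonneg_left ((norm_nonneg _).trans hprod) hpos
  have hlow : c * (1 + j + n) ≤ ‖β (j + n)‖ := by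
    have h := hβlow (j + n)
    push_cast at h
    rwa [← add_assoc] at h
  have hb : 0 < ‖β (j + n)‖ := norm_pos_iff.mpr (hβ _)
  rw [Qker, norm_mul]
  gcongr
  rw [norm_div, Finset.prod_range_succ, norm_mul]
  calc _ ≤ M * ‖∏ i ∈ Finset.range n, β (j + i)‖ /
        (‖∏ i ∈ Finset.range n, β (j + i)‖ * ‖β (j + n)‖) := by gcongr
    _ = M / ‖β (j + n)‖ := by field_simp
    _ ≤ M / (c * (1 + j + n)) := by gcongr
    _ = M / c * (1 + j + n : ℝ)⁻¹ := by rw [← div_div, div_eq_mul_inv (M / c)]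

/-- under (i) the monotonicity estimate on products of `β`,
(ii) the lower bound `|β(k)| ≥ c(1+k)`, and (iii) summability of
`(max(j,k)+1)^{-2}|μ(j)/μ(k)|² w(k)/w'(j)`, the double series
`S_n = Σ_{k} Σ_{j≥k} |K_n(k,j)|² w(k)/w'(j)` is finite, i.e., `Q_n` is
Hilbert–Schmidt, with `‖Q_n‖²_HS = S_n ≤ (M²/c²) Σ_k Σ_{j≥k} (1+j+n)^{-2}
|μ(j)/μ(k)|² w(k)/w'(j) < ∞`. -/
theorem statement2 (w w' : ℕ → ℝ) (hw : ∀ k, 0 < w k) (hw' : ∀ k, 0 < w' k)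
    (β μ : ℕ → ℂ) (hβ : ∀ k, β k ≠ 0) (hμ : ∀ k, μ k ≠ 0) (hμ0 : μ 0 = 1)
    (M c : ℝ) (hc : 0 < c)
    (hM : ∀ k j m : ℕ, k ≤ j →
      ‖∏ i ∈ Finset.range (m + 1), β (k + i)‖ ≤
        M * ‖∏ i ∈ Finset.range (m + 1), β (j + i)‖)
    (hβlow : ∀ k : ℕ, c * (1 + k) ≤ ‖β k‖)
    (hsum : Summable fun p : ℕ × ℕ =>
      ((max p.2 p.1 : ℝ) + 1)⁻¹ ^ 2 * ‖μ p.2 / μ p.1‖ ^ 2 * (w p.1 / w' p.2))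
    (n : ℕ) :
    Summable (HSterm w w' β μ n) ∧ Summable (Bterm w w' μ n) ∧
      ∑' p : ℕ × ℕ, HSterm w w' β μ n p ≤
        (M ^ 2 / c ^ 2) * ∑' p : ℕ × ℕ, Bterm w w' μ n p := by
  have hww (p : ℕ × ℕ) : 0 ≤ w p.1 / w' p.2 := (div_pos (hw _) (hw' _)).le
  have hB : Summable (Bterm w w' μ n) := by
    refine Summable.of_nonneg_of_le (fun p => ?_) (fun p => ?_) hsum
    · have := hww p
      unfold Bterm
      split_ifs <;> positivity
    · have := hww p
      unfold Bterm
      split_ifs with h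
      · rw [max_eq_left (Nat.cast_le.mpr h)]
        have hj : (p.2 : ℝ) + 1 ≤ 1 + p.2 + n := by
          linarith [(Nat.cast_nonneg n : (0 : ℝ) ≤ n)]
        have hinv := inv_anti₀ (by positivity) hj
        gcongr ?_ ^ 2 * _ * _
      · positivity
  have hle (p : ℕ × ℕ) : HSterm w w' β μ n p ≤ M ^ 2 / c ^ 2 * Bterm w w' μ n p := by
    have := hww p
    unfold HSterm Bterm
    split_ifs with h
    · calc _ ≤ (M / c * (1 + p.2 + n : ℝ)⁻¹ * ‖μ p.2 / μ p.1‖) ^ 2 * (w p.1 / w' p.2) := by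
            gcongr
            exact norm_Qker_le μ hβ hc hM hβlow h n
        _ = _ := by ring
    · simp
  have hHS : Summable (HSterm w w' β μ n) := by
    refine Summable.of_nonneg_of_le (fun p => ?_) hle (hB.mul_left _)
    have := hww p
    unfold HSterm
    split_ifs <;> positivity
  refine ⟨hHS, hB, ?_⟩
  rw [← tsum_mul_left]
  exact hHS.tsum_le_tsum hle (hB.mul_left _)
end

section
/- Let n ≥ 0 and assume the hypotheses under which Q_n : ℓ²_{w'} → ℓ²_w is a bounded two-sided inverse of D_n and Q_n maps finitely supported sequences to finitely supported sequences. Then the maximal domain of D_n equals its minimal domain: for every f ∈ ℓ²_w with D_n f ∈ ℓ²_{w'} there exists a sequence (f_j) of finitely supported sequences such that f_j → f in ℓ²_w and D_n f_j → D_n f in ℓ²_{w'} (i.e., f lies in the closure of the finitely supported sequences in the graph norm of D_n). -/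
/-- The Cauchy–Schwarz inequality for series, in majorant form. -/
lemma summable_and_sq_tsum_le_of_sq_le_mul {x p s : ℕ → ℝ} (hx : ∀ j, 0 ≤ x j)
    (hp : ∀ j, 0 ≤ p j) (hs : ∀ j, 0 ≤ s j) (h : ∀ j, x j ^ 2 ≤ p j * s j)
    (sp : Summable p) (ss : Summable s) :
    Summable x ∧ (∑' j, x j) ^ 2 ≤ (∑' j, p j) * ∑' j, s j := by
  have sx : Summable x := by
    refine Summable.of_nonneg_of_le hx (fun j => ?_) (sp.add ss)
    have h1 := hp j
    have h2 := hs j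
    exact abs_le_of_sq_le_sq' (by nlinarith [h j]) (by positivity) |>.2
  refine ⟨sx, le_of_tendsto (sx.tendsto_sum_tsum_nat.pow 2) (Filter.Eventually.of_forall fun N => ?_)⟩
  calc (∑ j ∈ Finset.range N, x j) ^ 2
      ≤ (∑ j ∈ Finset.range N, p j) * ∑ j ∈ Finset.range N, s j :=
        Finset.sum_sq_le_sum_mul_sum_of_sq_le_mul _ (fun j _ => hp j) (fun j _ => hs j)
          (fun j _ => h j)
    _ ≤ _ := mul_le_mul (sp.sum_le_tsum _ fun j _ => hp j) (ss.sum_le_tsum _ fun j _ => hs j)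
        (Finset.sum_nonneg fun j _ => hs j) (tsum_nonneg hp)

section

variable {w w' : ℕ → ℝ} {β μ : ℕ → ℂ} {M c : ℝ}

lemma hker_ne_zero (hβ : ∀ k, β k ≠ 0) (hμ : ∀ k, μ k ≠ 0) (n k : ℕ) : hker β μ n k ≠ 0 :=
  div_ne_zero (Finset.prod_ne_zero_iff.2 fun _ _ => hβ _) (hμ k)

/-- `h^{(n)}` solves the homogeneous equation `D_n h = 0`. -/
lemma mul_hker_succ (hμ : ∀ k, μ k ≠ 0) (n k : ℕ) :
    β k * (μ (k + 1) / μ k) * hker β μ n (k + 1) = β (k + n) * hker β μ n k := by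
  have h := Finset.prod_range_succ' (fun i => β (k + i)) n
  rw [Finset.prod_range_succ] at h
  have e : ∏ i ∈ Finset.range n, β (k + 1 + i) = ∏ i ∈ Finset.range n, β (k + (i + 1)) :=
    Finset.prod_congr rfl fun i _ => by rw [add_assoc, add_comm 1 i]
  have h1 := hμ k
  have h2 := hμ (k + 1)
  simp only [hker, e]
  field_simp
  linear_combination -h

/-- Reduction of `D_n` to the first difference of `f / h^{(n)}`. -/
lemma Dn_hker_mul (hμ : ∀ k, μ k ≠ 0) (n : ℕ) (v : ℕ → ℂ) (k : ℕ) :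
    Dn β μ n (fun k => hker β μ n k * v k) k =
      β (k + n) * hker β μ n k * (v k - v (k + 1)) := by
  simp only [Dn]
  linear_combination -(v (k + 1)) * mul_hker_succ (β := β) hμ n k

/-- Pointwise bound for the kernel of the inverse `Q_n`. -/
lemma norm_hker_mul_le (hβ : ∀ k, β k ≠ 0) (hμ : ∀ k, μ k ≠ 0) (hc : 0 < c)
    (hM : ∀ k j m : ℕ, k ≤ j →
      ‖∏ i ∈ Finset.range (m + 1), β (k + i)‖ ≤
        M * ‖∏ i ∈ Finset.range (m + 1), β (j + i)‖)
    (hβlow : ∀ k : ℕ, c * (1 + k) ≤ ‖β k‖) (n : ℕ) {k j : ℕ} (hkj : k ≤ j) (z : ℂ) :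
    ‖hker β μ n k‖ * ‖z / (β (j + n) * hker β μ n j)‖ ≤
      max M 1 / c * (((j : ℝ) + 1)⁻¹ * ‖μ j / μ k‖ * ‖z‖) := by
  have hB : ‖∏ i ∈ Finset.range n, β (k + i)‖ ≤
      max M 1 * ‖∏ i ∈ Finset.range n, β (j + i)‖ := by
    cases n with
    | zero => simp
    | succ m => exact (hM k j m hkj).trans (by gcongr; exact le_max_left _ _)
  have hb : c * ((j : ℝ) + 1) ≤ ‖β (j + n)‖ := by
    refine le_trans ?_ (hβlow (j + n))
    push_cast
    refine mul_le_mul_of_nonneg_left ?_ hc.le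
    linarith [(Nat.cast_nonneg n : (0 : ℝ) ≤ n)]
  have hBj : 0 < ‖∏ i ∈ Finset.range n, β (j + i)‖ :=
    norm_pos_iff.2 (Finset.prod_ne_zero_iff.2 fun _ _ => hβ _)
  have hk := norm_pos_iff.2 (hμ k)
  have hj := norm_pos_iff.2 (hμ j)
  have hβj := norm_pos_iff.2 (hβ (j + n))
  simp only [hker, norm_div, norm_mul]
  generalize ‖∏ i ∈ Finset.range n, β (k + i)‖ = Bk at *
  generalize ‖∏ i ∈ Finset.range n, β (j + i)‖ = Bj at *
  calc Bk / ‖μ k‖ * (‖z‖ / (‖β (j + n)‖ * (Bj / ‖μ j‖)))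
      ≤ (max M 1 * Bj) / ‖μ k‖ * (‖z‖ / (c * ((j : ℝ) + 1) * (Bj / ‖μ j‖))) := by gcongr
    _ = _ := by field_simp

/-- The Hilbert–Schmidt estimate for the tails of the series defining `Q_n g`. -/
lemma summable_and_tail_le (hw : ∀ k, 0 < w k) (hw' : ∀ k, 0 < w' k)
    (hβ : ∀ k, β k ≠ 0) (hμ : ∀ k, μ k ≠ 0) (hc : 0 < c)
    (hM : ∀ k j m : ℕ, k ≤ j →
      ‖∏ i ∈ Finset.range (m + 1), β (k + i)‖ ≤
        M * ‖∏ i ∈ Finset.range (m + 1), β (j + i)‖)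
    (hβlow : ∀ k : ℕ, c * (1 + k) ≤ ‖β k‖)
    (hsum : Summable fun p : ℕ × ℕ =>
      ((max p.2 p.1 : ℝ) + 1)⁻¹ ^ 2 * ‖μ p.2 / μ p.1‖ ^ 2 * (w p.1 / w' p.2))
    (n : ℕ) {g : ℕ → ℂ} (hg : MemL2 w' g) {k m : ℕ} (hkm : k ≤ m) :
    Summable (fun j => g (j + m) / (β (j + m + n) * hker β μ n (j + m))) ∧
      w k * ‖hker β μ n k * ∑' j, g (j + m) / (β (j + m + n) * hker β μ n (j + m))‖ ^ 2 ≤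
        (max M 1 / c) ^ 2 *
          (∑' j : ℕ, ((max j k : ℝ) + 1)⁻¹ ^ 2 * ‖μ j / μ k‖ ^ 2 * (w k / w' j)) *
          ∑' j, w' (j + m) * ‖g (j + m)‖ ^ 2 := by
  set a : ℕ → ℂ := fun j => g j / (β (j + n) * hker β μ n j)
  set P : ℕ → ℝ := fun j => ((max j k : ℝ) + 1)⁻¹ ^ 2 * ‖μ j / μ k‖ ^ 2 * (w k / w' j) with hP
  have P0 : ∀ j, 0 ≤ P j := fun j => by
    have := hw k
    have := hw' j
    positivity
  have sP : Summable P := hsum.prod_factor k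
  have sP' : Summable fun j => P (j + m) := (summable_nat_add_iff m).2 sP
  have ss : Summable fun j => w' (j + m) * ‖g (j + m)‖ ^ 2 := (summable_nat_add_iff m).2 hg
  have hwk := hw k
  have hh : 0 < ‖hker β μ n k‖ := norm_pos_iff.2 (hker_ne_zero hβ hμ n k)
  have pointwise : ∀ j, (Real.sqrt (w k) * ‖hker β μ n k‖ * ‖a (j + m)‖) ^ 2 ≤
      (max M 1 / c) ^ 2 * P (j + m) * (w' (j + m) * ‖g (j + m)‖ ^ 2) := fun j => by
    have hkj : k ≤ j + m := by omega
    have hb := norm_hker_mul_le hβ hμ hc hM hβlow n hkj (g (j + m))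
    have hmax : max ((j + m : ℕ) : ℝ) k = (j + m : ℕ) := max_eq_left (by exact_mod_cast hkj)
    have hw'j := hw' (j + m)
    simp only [hP, hmax]
    calc (Real.sqrt (w k) * ‖hker β μ n k‖ * ‖a (j + m)‖) ^ 2
        = w k * (‖hker β μ n k‖ * ‖a (j + m)‖) ^ 2 := by
          rw [mul_assoc, mul_pow, Real.sq_sqrt hwk.le]
      _ ≤ w k * (max M 1 / c * ((((j + m : ℕ) : ℝ) + 1)⁻¹ * ‖μ (j + m) / μ k‖ *
            ‖g (j + m)‖)) ^ 2 := by gcongr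
      _ = _ := by
        field_simp
  obtain ⟨k1, k2⟩ := summable_and_sq_tsum_le_of_sq_le_mul
    (x := fun j => Real.sqrt (w k) * ‖hker β μ n k‖ * ‖a (j + m)‖)
    (p := fun j => (max M 1 / c) ^ 2 * P (j + m))
    (s := fun j => w' (j + m) * ‖g (j + m)‖ ^ 2)
    (fun j => by positivity) (fun j => mul_nonneg (by positivity) (P0 _))
    (fun j => mul_nonneg (hw' _).le (by positivity)) pointwise (sP'.mul_left _) ss
  have sa : Summable fun j => ‖a (j + m)‖ :=
    (summable_mul_left_iff (mul_pos (Real.sqrt_pos.2 hwk) hh).ne').1 k1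
  refine ⟨sa.of_norm, ?_⟩
  rw [tsum_mul_left, tsum_mul_left, mul_pow, mul_pow, Real.sq_sqrt hwk.le] at k2
  calc w k * ‖hker β μ n k * ∑' j, a (j + m)‖ ^ 2
      = w k * ‖hker β μ n k‖ ^ 2 * ‖∑' j, a (j + m)‖ ^ 2 := by rw [norm_mul]; ring
    _ ≤ w k * ‖hker β μ n k‖ ^ 2 * (∑' j, ‖a (j + m)‖) ^ 2 := by
      gcongr
      exact norm_tsum_le_tsum_norm sa
    _ ≤ _ := k2
    _ ≤ _ := by
      refine mul_le_mul_of_nonneg_right (mul_le_mul_of_nonneg_left ?_ (by positivity))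
        (tsum_nonneg fun j => mul_nonneg (hw' _).le (by positivity))
      rw [← sP.sum_add_tsum_nat_add m]
      exact le_add_of_nonneg_left (Finset.sum_nonneg fun j _ => P0 j)

end

/-- under the hypotheses under which `Q_n` is a bounded two-sided
inverse of `D_n` (mapping finitely supported sequences to finitely supported
sequences), the maximal domain of `D_n` equals its minimal domain: every
`f ∈ ℓ²_w` with `D_n f ∈ ℓ²_{w'}` is a limit, in the graph norm of `D_n`, of a
sequence of finitely supported sequences. -/
theorem statement6 (w w' : ℕ → ℝ) (hw : ∀ k, 0 < w k) (hw' : ∀ k, 0 < w' k)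
    (β μ : ℕ → ℂ) (hβ : ∀ k, β k ≠ 0) (hμ : ∀ k, μ k ≠ 0) (hμ0 : μ 0 = 1)
    (M c : ℝ) (hc : 0 < c)
    (hM : ∀ k j m : ℕ, k ≤ j →
      ‖∏ i ∈ Finset.range (m + 1), β (k + i)‖ ≤
        M * ‖∏ i ∈ Finset.range (m + 1), β (j + i)‖)
    (hβlow : ∀ k : ℕ, c * (1 + k) ≤ ‖β k‖)
    (hsum : Summable fun p : ℕ × ℕ =>
      ((max p.2 p.1 : ℝ) + 1)⁻¹ ^ 2 * ‖μ p.2 / μ p.1‖ ^ 2 * (w p.1 / w' p.2))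
    (n : ℕ) (hdiv : ¬ MemL2 w (hker β μ n)) :
    ∀ f : ℕ → ℂ, MemL2 w f → MemL2 w' (Dn β μ n f) →
      ∃ F : ℕ → (ℕ → ℂ),
        (∀ j : ℕ, (Function.support (F j)).Finite) ∧
        Filter.Tendsto (fun j : ℕ => ∑' k : ℕ, w k * ‖F j k - f k‖ ^ 2)
          Filter.atTop (nhds 0) ∧
        Filter.Tendsto
          (fun j : ℕ => ∑' k : ℕ, w' k * ‖Dn β μ n (F j) k - Dn β μ n f k‖ ^ 2)
          Filter.atTop (nhds 0) := by
  intro f hf hg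
  have hh := hker_ne_zero hβ hμ n
  have w0 : ∀ k (z : ℂ), 0 ≤ w k * ‖z‖ ^ 2 := fun k z => mul_nonneg (hw k).le (by positivity)
  set g := Dn β μ n f with hgdef
  set a : ℕ → ℂ := fun j => g j / (β (j + n) * hker β μ n j) with ha
  set t : ℕ → ℂ := fun m => ∑' j, a (j + m) with ht
  set S : ℕ → ℝ := fun m => ∑' j, w' (j + m) * ‖g (j + m)‖ ^ 2 with hS
  set A : ℕ → ℝ := fun k =>
    ∑' j : ℕ, ((max j k : ℝ) + 1)⁻¹ ^ 2 * ‖μ j / μ k‖ ^ 2 * (w k / w' j) with hA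
  have A0 : ∀ k, 0 ≤ A k := fun k => tsum_nonneg fun j => by
    have := hw k
    have := hw' j
    positivity
  have sA : Summable A := hsum.prod
  have bound : ∀ k m, k ≤ m →
      w k * ‖hker β μ n k * t m‖ ^ 2 ≤ (max M 1 / c) ^ 2 * A k * S m := fun k m hkm =>
    (summable_and_tail_le hw hw' hβ hμ hc hM hβlow hsum n hg hkm).2
  have sa : Summable a :=
    (summable_and_tail_le hw hw' hβ hμ hc hM hβlow hsum n hg (le_refl 0)).1
  have S_anti : Antitone S := antitone_nat_of_succ_le fun m => by
    have sm : Summable fun j => w' (j + m) * ‖g (j + m)‖ ^ 2 := (summable_nat_add_iff m).2 hg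
    have e := sm.tsum_eq_zero_add
    simp only [add_right_comm _ 1 m, zero_add] at e
    simp only [hS, ← add_assoc, e]
    exact le_add_of_nonneg_left (mul_nonneg (hw' m).le (by positivity))
  have t_sub : ∀ k, t k - t (k + 1) = a k := fun k => by
    have e := ((summable_nat_add_iff k).2 sa).tsum_eq_zero_add
    simp only [add_right_comm _ 1 k, zero_add] at e
    simp only [ht, ← add_assoc, e]
    ring
  have g_eq : ∀ k, g k = β (k + n) * hker β μ n k * a k := fun k => by
    have := hh k
    have := hβ (k + n)
    simp only [ha]
    field_simp
  have f_eq : ∃ L, ∀ k, f k = hker β μ n k * (L + t k) := by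
    have fh : f = fun k => hker β μ n k * (f k / hker β μ n k) :=
      funext fun k => (mul_div_cancel₀ _ (hh k)).symm
    have step : ∀ k, f (k + 1) / hker β μ n (k + 1) - t (k + 1) = f k / hker β μ n k - t k := by
      intro k
      have e := g_eq k
      rw [hgdef, fh, Dn_hker_mul hμ] at e
      have e' := mul_left_cancel₀ (mul_ne_zero (hβ (k + n)) (hh k)) e
      linear_combination t_sub k - e'
    have const : ∀ k, f k / hker β μ n k - t k = f 0 / hker β μ n 0 - t 0 := by
      intro k
      induction k with
      | zero => rfl
      | succ k ih => rw [step, ih]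
    refine ⟨f 0 / hker β μ n 0 - t 0, fun k => ?_⟩
    rw [← const k, sub_add_cancel, mul_div_cancel₀ _ (hh k)]
  obtain ⟨L, hL⟩ := f_eq
  have L0 : L = 0 := by
    by_contra hne
    refine hdiv ?_
    have st : Summable fun k => w k * ‖hker β μ n k * t k‖ ^ 2 :=
      Summable.of_nonneg_of_le (fun k => w0 k _)
        (fun k => (bound k k le_rfl).trans <|
          mul_le_mul_of_nonneg_left (S_anti (Nat.zero_le k)) (mul_nonneg (by positivity) (A0 k)))
        ((sA.mul_left _).mul_right _)
    have hL' := norm_pos_iff.2 hne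
    refine Summable.of_nonneg_of_le (fun k => w0 k _) (fun k => ?_)
      ((hf.add st).mul_left (2 / ‖L‖ ^ 2))
    have e : hker β μ n k * L = f k - hker β μ n k * t k := by rw [hL k]; ring
    have h1 := norm_sub_le (f k) (hker β μ n k * t k)
    rw [← e, norm_mul] at h1
    have h2 : (‖hker β μ n k‖ * ‖L‖) ^ 2 ≤
        2 * (‖f k‖ ^ 2 + ‖hker β μ n k * t k‖ ^ 2) :=
      (pow_le_pow_left₀ (by positivity) h1 2).trans add_sq_le
    rw [div_mul_eq_mul_div, le_div_iff₀ (by positivity)]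
    nlinarith [mul_le_mul_of_nonneg_left h2 (hw k).le]
  have hf' : f = fun k => hker β μ n k * t k := funext fun k => by rw [hL k, L0, zero_add]
  have S_lim : Filter.Tendsto S Filter.atTop (nhds 0) :=
    tendsto_sum_nat_add fun j => w' j * ‖g j‖ ^ 2
  refine ⟨fun N k => hker β μ n k * (t k - t (max k N)), fun N => ?_, ?_, ?_⟩
  · refine (Set.finite_lt_nat N).subset fun k hk => ?_
    by_contra hkN
    exact hk (by simp [max_eq_left (Nat.le_of_not_lt hkN)])
  · refine squeeze_zero (g := fun N => (max M 1 / c) ^ 2 * (∑' k, A k) * S N)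
      (fun N => tsum_nonneg fun k => w0 k _) (fun N => ?_) (by simpa using S_lim.const_mul _)
    have le : ∀ k, w k * ‖hker β μ n k * (t k - t (max k N)) - f k‖ ^ 2 ≤
        (max M 1 / c) ^ 2 * A k * S N := fun k => by
      have e : hker β μ n k * (t k - t (max k N)) - f k = -(hker β μ n k * t (max k N)) := by
        rw [hf']; ring
      rw [e, norm_neg]
      exact (bound k _ (le_max_left _ _)).trans <|
        mul_le_mul_of_nonneg_left (S_anti (le_max_right _ _)) (mul_nonneg (by positivity) (A0 k))
    have sR : Summable fun k => (max M 1 / c) ^ 2 * A k * S N := (sA.mul_left _).mul_right _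
    rw [← tsum_mul_left (f := A), ← tsum_mul_right (a := S N)]
    exact (Summable.of_nonneg_of_le (fun k => w0 k _) le sR).tsum_le_tsum le sR
  · refine S_lim.congr fun N => ?_
    have e : ∀ k, w' k * ‖Dn β μ n (fun k => hker β μ n k * (t k - t (max k N))) k - g k‖ ^ 2 =
        if k < N then 0 else w' k * ‖g k‖ ^ 2 := fun k => by
      rw [Dn_hker_mul hμ]
      split_ifs with hk
      · rw [max_eq_right hk.le, max_eq_right (Nat.succ_le_of_lt hk), sub_sub_sub_cancel_right,
          t_sub, ← g_eq]
        simp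
      · rw [max_eq_left (not_lt.1 hk), max_eq_left ((not_lt.1 hk).trans k.le_succ)]
        simp
    have se : Summable fun k => if k < N then 0 else w' k * ‖g k‖ ^ 2 :=
      (summable_nat_add_iff N).1 (by simpa using (summable_nat_add_iff N).2 hg)
    rw [tsum_congr e, ← se.sum_add_tsum_nat_add N,
      Finset.sum_eq_zero fun k hk => if_pos (Finset.mem_range.1 hk)]
    simp [hS]
end

section
/- Let m ≥ 1 and define (Q⁻_m g)(k) = Σ_{j=0}^{k} (∏_{i=j}^{j+m−2} β(i))/(∏_{i=k}^{k+m−1} β(i)) · (μ(j+m−1)/μ(k+m)) · g(j). Then Q⁻_m is a two-sided inverse of D⁻_m: D⁻_m(Q⁻_m g) = g for every sequence g, and Q⁻_m(D⁻_m f) = f for every sequence f. -/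
/-- The operator `D⁻_m` (the Fourier component `D_n` with `n = −m < 0`). -/
noncomputable def Dminus (β μ : ℕ → ℂ) (m : ℕ) (f : ℕ → ℂ) (k : ℕ) : ℂ :=
  β (k + m - 1) * (μ (k + m) / μ (k + m - 1)) * f k -
    (if k = 0 then 0 else β (k - 1) * f (k - 1))

/-- The operator `Q⁻_m`:
`(Q⁻_m g)(k) = Σ_{j=0}^{k} (∏_{i=j}^{j+m−2} β(i))/(∏_{i=k}^{k+m−1} β(i)) ·
(μ(j+m−1)/μ(k+m)) · g(j)` (for `m = 1` the numerator product is empty, hence `1`). -/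
noncomputable def Qminus (β μ : ℕ → ℂ) (m : ℕ) (g : ℕ → ℂ) (k : ℕ) : ℂ :=
  ∑ j ∈ Finset.range (k + 1),
    (∏ i ∈ Finset.Ico j (j + m - 1), β i) / (∏ i ∈ Finset.Ico k (k + m), β i) *
      (μ (j + m - 1) / μ (k + m)) * g j

/-- The integrating factor of `D⁻_{n+1}`. -/
noncomputable def minusWeight (β μ : ℕ → ℂ) (n k : ℕ) : ℂ :=
  (∏ i ∈ Finset.Ico k (k + n + 1), β i) * μ (k + n + 1)

lemma minusWeight_ne_zero {β μ : ℕ → ℂ} (hβ : ∀ k, β k ≠ 0) (hμ : ∀ k, μ k ≠ 0) (n k : ℕ) :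
    minusWeight β μ n k ≠ 0 :=
  mul_ne_zero (Finset.prod_ne_zero_iff.2 fun i _ => hβ i) (hμ _)

lemma minusWeight_mul_Qminus {β μ : ℕ → ℂ} (hβ : ∀ k, β k ≠ 0) (hμ : ∀ k, μ k ≠ 0)
    (n : ℕ) (g : ℕ → ℂ) (k : ℕ) :
    minusWeight β μ n k * Qminus β μ (n + 1) g k =
      ∑ j ∈ Finset.range (k + 1), (∏ i ∈ Finset.Ico j (j + n), β i) * μ (j + n) * g j := by
  have hP : ∏ i ∈ Finset.Ico k (k + n + 1), β i ≠ 0 := Finset.prod_ne_zero_iff.2 fun i _ => hβ i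
  have hM := hμ (k + n + 1)
  simp only [Qminus, minusWeight, Finset.mul_sum, ← add_assoc, Nat.add_sub_cancel]
  refine Finset.sum_congr rfl fun j _ => ?_
  field_simp

lemma mul_Dminus_zero {β μ : ℕ → ℂ} (hμ : ∀ k, μ k ≠ 0) (n : ℕ) (f : ℕ → ℂ) :
    (∏ i ∈ Finset.Ico 0 (0 + n), β i) * μ (0 + n) * Dminus β μ (n + 1) f 0 =
      minusWeight β μ n 0 * f 0 := by
  have hM := hμ (0 + n)
  simp only [Dminus, minusWeight, ← add_assoc, Nat.add_sub_cancel, if_true, sub_zero]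
  rw [Finset.prod_Ico_succ_top (by omega)]
  field_simp

lemma mul_Dminus_succ {β μ : ℕ → ℂ} (hμ : ∀ k, μ k ≠ 0) (n : ℕ) (f : ℕ → ℂ) (k : ℕ) :
    (∏ i ∈ Finset.Ico (k + 1) (k + 1 + n), β i) * μ (k + 1 + n) * Dminus β μ (n + 1) f (k + 1) =
      minusWeight β μ n (k + 1) * f (k + 1) - minusWeight β μ n k * f k := by
  have hM := hμ (k + 1 + n)
  simp only [Dminus, minusWeight, ← add_assoc, Nat.add_sub_cancel, if_neg k.succ_ne_zero]
  rw [Finset.prod_Ico_succ_top (by omega : k + 1 ≤ k + 1 + n),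
    Finset.prod_eq_prod_Ico_succ_bot (by omega : k < k + n + 1), add_right_comm k n 1]
  field_simp

/-- for `m ≥ 1`, `Q⁻_m` is a two-sided inverse of `D⁻_m`:
`D⁻_m (Q⁻_m g) = g` for every sequence `g` and `Q⁻_m (D⁻_m f) = f` for every
sequence `f`. -/
theorem statement10 (β μ : ℕ → ℂ) (hβ : ∀ k, β k ≠ 0) (hμ : ∀ k, μ k ≠ 0)
    (hμ0 : μ 0 = 1) (m : ℕ) (hm : 1 ≤ m) :
    (∀ g : ℕ → ℂ, Dminus β μ m (Qminus β μ m g) = g) ∧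
    (∀ f : ℕ → ℂ, Qminus β μ m (Dminus β μ m f) = f) := by
  obtain ⟨n, rfl⟩ := Nat.exists_eq_add_of_le' hm
  refine ⟨fun g => funext fun k => ?_, fun f => funext fun k => ?_⟩
  · refine mul_left_cancel₀ (mul_ne_zero (Finset.prod_ne_zero_iff.2 fun i _ => hβ i)
      (hμ (k + n)) : (∏ i ∈ Finset.Ico k (k + n), β i) * μ (k + n) ≠ 0) ?_
    cases k with
    | zero => rw [mul_Dminus_zero hμ, minusWeight_mul_Qminus hβ hμ, Finset.sum_range_one]
    | succ k =>
      rw [mul_Dminus_succ hμ, minusWeight_mul_Qminus hβ hμ, minusWeight_mul_Qminus hβ hμ,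
        Finset.sum_range_succ _ (k + 1), add_sub_cancel_left]
  · refine mul_left_cancel₀ (minusWeight_ne_zero hβ hμ n k) ?_
    rw [minusWeight_mul_Qminus hβ hμ]
    induction k with
    | zero => rw [Finset.sum_range_one, mul_Dminus_zero hμ]
    | succ k ih => rw [Finset.sum_range_succ, ih, mul_Dminus_succ hμ, add_sub_cancel]
end

section
/- (Theorem 3.1) Assume: (a) there is c > 0 with |β(k)| ≥ c(1+k) for all k; (b) |∏_{i=0}^{m} β(k+i)| ≤ M |∏_{i=0}^{m} β(j+i)| for all k ≤ j and all m ≥ 0; (c) Σ_{k=0}^∞ Σ_{j=0}^∞ (max(j,k)+1)^{−2} |μ(j)/μ(k)|² w(k)/w'(j) < ∞; (d) there exists N ≥ 0 such that Σ_{k=0}^∞ (1+k)^{2n} |μ(k)|^{−2} w(k) < ∞ for all n < N and = ∞ for all n ≥ N; (e) Σ_{k=0}^∞ |β(k) − β(k)μ(k+1)/μ(k)|² w'(k) < ∞. Let H_w be the Hilbert space of families f = (f_n)_{n∈ℤ} of sequences f_n : ℕ → ℂ with ‖f‖²_w = Σ_{n≥0} Σ_{k≥0} w(k)|f_n(k)|²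 + Σ_{n<0} Σ_{k≥0} w(k−n)|f_n(k)|² < ∞, and similarly H_{w'}. Let D : H_w ⊇ dom(D) → H_{w'} be the operator acting componentwise by (Df)_{n+1} = D_n f_n, where for n ≥ 0, (D_n f)(k) = β(k+n) f(k) − β(k)(μ(k+1)/μ(k)) f(k+1), and for n < 0, (D_n f)(k) = β(k−n−1)(μ(k−n)/μ(k−n−1)) f(k) − β(k−1) f(k−1), with dom(D) = {f ∈ H_w : Df ∈ H_{w'}}. Then D has a compact parametrix: there exists a compact operator Q : H_{w'} → H_w satisfying DQ = I on H_{w'}, and QD = I − C on dom(D), where C is a compact operator. -/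
/-- The weight of the GNS Hilbert space `H_w` at Fourier mode `n ∈ ℤ` and index
`k ∈ ℕ`: it is `w(k)` for `n ≥ 0` and `w(k−n) = w(k+|n|)` for `n < 0`. -/
noncomputable def Wt (w : ℕ → ℝ) (n : ℤ) (k : ℕ) : ℝ :=
  if 0 ≤ n then w k else w (k + (-n).toNat)

/-- The Dirac-type operator `D` acting componentwise on families
`f = (f_n)_{n ∈ ℤ}` of sequences by `(Df)_n = D_{n-1} f_{n-1}`, where for `m ≥ 0`
`(D_m f)(k) = β(k+m) f(k) − β(k)(μ(k+1)/μ(k)) f(k+1)`, and for `m < 0`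
`(D_m f)(k) = β(k−m−1)(μ(k−m)/μ(k−m−1)) f(k) − β(k−1) f(k−1)`. -/
noncomputable def Dop (β μ : ℕ → ℂ) (f : ℤ → ℕ → ℂ) (n : ℤ) (k : ℕ) : ℂ :=
  if 0 ≤ n - 1 then
    β (k + (n - 1).toNat) * f (n - 1) k - β k * (μ (k + 1) / μ k) * f (n - 1) (k + 1)
  else
    β (k + (1 - n).toNat - 1) * (μ (k + (1 - n).toNat) / μ (k + (1 - n).toNat - 1)) *
        f (n - 1) k -
      (if k = 0 then 0 else β (k - 1) * f (n - 1) (k - 1))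

/-- The Hilbert space `ℓ²(ℤ × ℕ)`; the weighted GNS space `H_w` is identified with
it isometrically, an element `f ∈ H_w` corresponding to
`φ(n,k) = √(Wt w n k) · f_n(k)`. -/
abbrev Ews : Type := lp (fun _ : ℤ × ℕ => ℂ) 2

/-- Recovering the family `f = (f_n)` from its weighted representative `φ`:
`f_n(k) = φ(n,k)/√(Wt w n k)`. -/
noncomputable def unrep (w : ℕ → ℝ) (φ : ℤ × ℕ → ℂ) (n : ℤ) (k : ℕ) : ℂ :=
  φ (n, k) / (Real.sqrt (Wt w n k) : ℂ)

theorem norm_sq_tsum_mul_le {a x : ℕ → ℂ} (ha : Summable fun j => ‖a j‖ ^ 2)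
    (hx : Summable fun j => ‖x j‖ ^ 2) :
    (Summable fun j => a j * x j) ∧
      ‖∑' j, a j * x j‖ ^ 2 ≤ (∑' j, ‖a j‖ ^ 2) * ∑' j, ‖x j‖ ^ 2 := by
  obtain ⟨hs, hle⟩ := Real.summable_and_inner_le_Lp_mul_Lq_tsum_of_nonneg
    (f := fun j => ‖a j‖) (g := fun j => ‖x j‖) Real.HolderConjugate.two_two
    (fun _ => norm_nonneg _) (fun _ => norm_nonneg _) (by simpa using ha) (by simpa using hx)
  have hs' : Summable fun j => ‖a j * x j‖ := by simpa using hs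
  refine ⟨hs'.of_norm, ?_⟩
  have hnorm : ‖∑' j, a j * x j‖ ≤ √(∑' j, ‖a j‖ ^ 2) * √(∑' j, ‖x j‖ ^ 2) := by
    refine (norm_tsum_le_tsum_norm hs').trans ?_
    simpa [Real.sqrt_eq_rpow] using hle
  calc ‖∑' j, a j * x j‖ ^ 2
      ≤ (√(∑' j, ‖a j‖ ^ 2) * √(∑' j, ‖x j‖ ^ 2)) ^ 2 := by gcongr
    _ = (∑' j, ‖a j‖ ^ 2) * ∑' j, ‖x j‖ ^ 2 := by
      rw [mul_pow, Real.sq_sqrt (tsum_nonneg fun _ => by positivity),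
        Real.sq_sqrt (tsum_nonneg fun _ => by positivity)]

theorem Ews.hasSum_norm_sq (g : Ews) : HasSum (fun p => ‖g p‖ ^ 2) (‖g‖ ^ 2) := by
  simpa using lp.hasSum_norm (p := 2) (by simp) g

theorem memℓp_two_of_summable {f : ℤ × ℕ → ℂ} (hf : Summable fun p => ‖f p‖ ^ 2) :
    Memℓp f 2 :=
  memℓp_gen (by simpa using hf)

/-- Shifting the mode of an element of `ℓ²(ℤ × ℕ)` keeps it square summable. -/
theorem Ews.hasSum_shift (g : Ews) :
    HasSum (fun p : ℤ × ℕ => ‖g (p.1 + 1, p.2)‖ ^ 2) (‖g‖ ^ 2) :=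
  ((Equiv.addRight (1 : ℤ)).prodCongr (Equiv.refl ℕ)).hasSum_iff.mpr g.hasSum_norm_sq

theorem Ews.summable_shift_mode (g : Ews) (m : ℤ) :
    Summable fun j => ‖g (m + 1, j)‖ ^ 2 :=
  g.hasSum_shift.summable.prod_factor m

theorem summable_block_mul {b : ℤ → ℕ → ℕ → ℂ}
    (hs : ∀ m, Summable fun p : ℕ × ℕ => ‖b m p.1 p.2‖ ^ 2) (g : Ews) (m : ℤ) (k : ℕ) :
    Summable fun j => b m k j * g (m + 1, j) :=
  (norm_sq_tsum_mul_le ((hs m).prod_factor k) (g.summable_shift_mode m)).1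

/-- A family of Hilbert–Schmidt blocks with norms at most `B` acts on `ℓ²(ℤ × ℕ)` with norm at
most `B`. -/
theorem block_apply_bound {b : ℤ → ℕ → ℕ → ℂ} {B : ℝ}
    (hs : ∀ m, Summable fun p : ℕ × ℕ => ‖b m p.1 p.2‖ ^ 2)
    (hB : ∀ m, ∑' p : ℕ × ℕ, ‖b m p.1 p.2‖ ^ 2 ≤ B ^ 2) (g : Ews) :
    (Summable fun p : ℤ × ℕ => ‖∑' j, b p.1 p.2 j * g (p.1 + 1, j)‖ ^ 2) ∧
      ∑' p : ℤ × ℕ, ‖∑' j, b p.1 p.2 j * g (p.1 + 1, j)‖ ^ 2 ≤ B ^ 2 * ‖g‖ ^ 2 := by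
  set G : ℤ → ℝ := fun m => ∑' j, ‖g (m + 1, j)‖ ^ 2
  have hG0 : ∀ m, 0 ≤ G m := fun m => tsum_nonneg fun _ => by positivity
  have hGsum : HasSum G (‖g‖ ^ 2) :=
    g.hasSum_shift.prod_fiberwise fun m => (g.summable_shift_mode m).hasSum
  set r : ℤ → ℕ → ℝ := fun m k => ∑' j, ‖b m k j‖ ^ 2
  have hr0 : ∀ m k, 0 ≤ r m k := fun m k => tsum_nonneg fun _ => by positivity
  have hrsum : ∀ m, HasSum (r m) (∑' p : ℕ × ℕ, ‖b m p.1 p.2‖ ^ 2) := fun m =>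
    (hs m).hasSum.prod_fiberwise fun k => ((hs m).prod_factor k).hasSum
  have hle : ∀ p : ℤ × ℕ, ‖∑' j, b p.1 p.2 j * g (p.1 + 1, j)‖ ^ 2 ≤ r p.1 p.2 * G p.1 :=
    fun p => (norm_sq_tsum_mul_le ((hs p.1).prod_factor p.2) (g.summable_shift_mode p.1)).2
  have htotal0 : ∀ m, 0 ≤ ∑' p : ℕ × ℕ, ‖b m p.1 p.2‖ ^ 2 := fun m =>
    tsum_nonneg fun _ => by positivity
  have hfib : ∀ m, HasSum (fun k => r m k * G m) ((∑' p : ℕ × ℕ, ‖b m p.1 p.2‖ ^ 2) * G m) :=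
    fun m => (hrsum m).mul_right _
  have hmode : Summable fun m => (∑' p : ℕ × ℕ, ‖b m p.1 p.2‖ ^ 2) * G m :=
    Summable.of_nonneg_of_le (fun m => mul_nonneg (htotal0 m) (hG0 m))
      (fun m => mul_le_mul_of_nonneg_right (hB m) (hG0 m)) (hGsum.summable.mul_left _)
  have hprod : Summable fun p : ℤ × ℕ => r p.1 p.2 * G p.1 := by
    rw [summable_prod_of_nonneg fun p => mul_nonneg (hr0 _ _) (hG0 _)]
    refine ⟨fun m => (hfib m).summable, ?_⟩
    simpa only [(hfib _).tsum_eq] using hmode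
  have hsumm := Summable.of_nonneg_of_le (fun p => by positivity) hle hprod
  refine ⟨hsumm, (hsumm.tsum_le_tsum hle hprod).trans ?_⟩
  rw [hprod.tsum_prod' fun m => (hfib m).summable]
  simp only [(hfib _).tsum_eq]
  rw [← hGsum.tsum_eq, ← tsum_mul_left]
  exact hmode.tsum_le_tsum (fun m => mul_le_mul_of_nonneg_right (hB m) (hG0 m))
    (hGsum.summable.mul_left _)

theorem norm_le_of_block_apply {b : ℤ → ℕ → ℕ → ℂ} {B : ℝ} (hB0 : 0 ≤ B)
    (hs : ∀ m, Summable fun p : ℕ × ℕ => ‖b m p.1 p.2‖ ^ 2)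
    (hB : ∀ m, ∑' p : ℕ × ℕ, ‖b m p.1 p.2‖ ^ 2 ≤ B ^ 2) {g h : Ews}
    (hh : ∀ p : ℤ × ℕ, h p = ∑' j, b p.1 p.2 j * g (p.1 + 1, j)) :
    ‖h‖ ≤ B * ‖g‖ := by
  refine le_of_sq_le_sq ?_ (by positivity)
  rw [← h.hasSum_norm_sq.tsum_eq, mul_pow]
  simpa only [hh] using (block_apply_bound hs hB g).2

theorem exists_block_clm {b : ℤ → ℕ → ℕ → ℂ} {B : ℝ} (hB0 : 0 ≤ B)
    (hs : ∀ m, Summable fun p : ℕ × ℕ => ‖b m p.1 p.2‖ ^ 2)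
    (hB : ∀ m, ∑' p : ℕ × ℕ, ‖b m p.1 p.2‖ ^ 2 ≤ B ^ 2) :
    ∃ T : Ews →L[ℂ] Ews, ∀ (g : Ews) (p : ℤ × ℕ),
      T g p = ∑' j, b p.1 p.2 j * g (p.1 + 1, j) := by
  let T₀ : Ews →ₗ[ℂ] Ews :=
    { toFun := fun g => ⟨fun p => ∑' j, b p.1 p.2 j * g (p.1 + 1, j),
        memℓp_two_of_summable (block_apply_bound hs hB g).1⟩
      map_add' := fun g h => by
        ext p
        simpa only [lp.coeFn_add, Pi.add_apply, mul_add] using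
          (summable_block_mul hs g p.1 p.2).tsum_add (summable_block_mul hs h p.1 p.2)
      map_smul' := fun z g => by
        ext p
        simp only [lp.coeFn_smul, Pi.smul_apply, smul_eq_mul, RingHom.id_apply, mul_left_comm _ z,
          tsum_mul_left] }
  exact ⟨T₀.mkContinuous B fun g => norm_le_of_block_apply hB0 hs hB fun _ => rfl,
    fun _ _ => rfl⟩

theorem isCompactOperator_of_finite_support {T : Ews →L[ℂ] Ews} (S : Finset (ℤ × ℕ))
    (hT : ∀ g, ∀ p ∉ S, T g p = 0) : IsCompactOperator T := by
  have hsum : ∀ R : Finset (ℤ × ℕ), IsCompactOperator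
      (fun g => ∑ p ∈ R, lp.single (E := fun _ : ℤ × ℕ => ℂ) 2 p (T g p) : Ews → Ews) := by
    intro R
    induction R using Finset.induction_on with
    | empty =>
      simp only [Finset.sum_empty]
      exact isCompactOperator_zero
    | insert p R hp ih =>
      simp only [Finset.sum_insert hp]
      refine IsCompactOperator.add ?_ ih
      exact ((isCompactOperator_id (E := ℂ)).clm_comp
        (lp.singleContinuousLinearMap ℂ (fun _ : ℤ × ℕ => ℂ) 2 p)).comp_clm
          ((lp.evalCLM ℂ (fun _ : ℤ × ℕ => ℂ) 2 p).comp T)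
  convert hsum S using 1
  ext g q
  rw [lp.coeFn_sum, Finset.sum_apply]
  by_cases hq : q ∈ S
  · rw [Finset.sum_eq_single_of_mem q hq]
    · simp
    · intro p _ hpq
      simp [lp.single_apply, hpq.symm]
  · rw [hT g q hq, Finset.sum_eq_zero]
    intro p hp
    have : q ≠ p := fun h => hq (h ▸ hp)
    simp [lp.single_apply, this]

/-- A family of summable blocks whose sums tend to zero is uniformly small off a finite set. -/
theorem exists_finset_tsum_off_le {f : ℤ → ℕ × ℕ → ℝ}
    (ht : Filter.Tendsto (fun m => ∑' p, f m p) Filter.cofinite (nhds 0)) {δ : ℝ} (hδ : 0 < δ) :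
    ∃ S : Finset (ℤ × ℕ × ℕ), ∀ m, ∑' p, (if (m, p) ∈ S then 0 else f m p) ≤ δ := by
  have hF : {m : ℤ | ¬ ∑' p, f m p < δ}.Finite :=
    Filter.eventually_cofinite.mp (ht.eventually_lt_const hδ)
  have htail : ∀ m, ∃ S : Finset (ℕ × ℕ), ∑' p : {p // p ∉ S}, f m p < δ := fun m =>
    ((tendsto_tsum_compl_atTop_zero (f m)).eventually_lt_const hδ).exists
  choose S hS using htail
  refine ⟨hF.toFinset.biUnion fun m => (S m).image fun p => (m, p), fun m => ?_⟩
  have hmem : ∀ p, (m, p) ∈ (hF.toFinset.biUnion fun m => (S m).image fun p => (m, p)) ↔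
      m ∈ hF.toFinset ∧ p ∈ S m := fun p => by
    simp only [Finset.mem_biUnion, Finset.mem_image, Prod.mk.injEq]
    constructor
    · rintro ⟨_, hm, _, hp, rfl, rfl⟩
      exact ⟨hm, hp⟩
    · rintro ⟨hm, hp⟩
      exact ⟨m, hm, p, hp, rfl, rfl⟩
  simp only [hmem]
  by_cases hm : m ∈ hF.toFinset
  · refine le_trans (le_of_eq ?_) (hS m).le
    rw [show ∑' p : {p // p ∉ S m}, f m p = ∑' p, Set.indicator {p | p ∉ S m} (f m) p from
      tsum_subtype {p | p ∉ S m} (f m)]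
    refine tsum_congr fun p => ?_
    simp only [hm, true_and]
    by_cases hp : p ∈ S m <;> simp [hp]
  · have hlt : ∑' p, f m p < δ := by simpa using hm
    simpa only [hm, false_and, if_false] using hlt.le

/-- A family of Hilbert–Schmidt blocks whose norms tend to zero acts on `ℓ²(ℤ × ℕ)` as a compact
operator. -/
theorem exists_compact_block_clm {b : ℤ → ℕ → ℕ → ℂ}
    (hs : ∀ m, Summable fun p : ℕ × ℕ => ‖b m p.1 p.2‖ ^ 2)
    (ht : Filter.Tendsto (fun m => ∑' p : ℕ × ℕ, ‖b m p.1 p.2‖ ^ 2) Filter.cofinite (nhds 0)) :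
    ∃ T : Ews →L[ℂ] Ews, IsCompactOperator T ∧ ∀ (g : Ews) (p : ℤ × ℕ),
      T g p = ∑' j, b p.1 p.2 j * g (p.1 + 1, j) := by
  obtain ⟨A, hA⟩ := ht.bddAbove_range_of_cofinite
  have hA' : ∀ m, ∑' p : ℕ × ℕ, ‖b m p.1 p.2‖ ^ 2 ≤ A := fun m => hA ⟨m, rfl⟩
  have hA0 : 0 ≤ A := le_trans (tsum_nonneg fun _ => sq_nonneg _) (hA' 0)
  have hbound : ∀ m, ∑' p : ℕ × ℕ, ‖b m p.1 p.2‖ ^ 2 ≤ √A ^ 2 := fun m => by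
    rw [Real.sq_sqrt hA0]
    exact hA' m
  obtain ⟨T, hT⟩ := exists_block_clm (Real.sqrt_nonneg A) hs hbound
  refine ⟨T, ?_, hT⟩
  have hclosed : IsClosed {U : Ews →L[ℂ] Ews | IsCompactOperator U} :=
    isClosed_setOfPred_isCompactOperator
  refine hclosed.closure_subset (Metric.mem_closure_iff.mpr fun ε hε => ?_)
  obtain ⟨S, hS⟩ := exists_finset_tsum_off_le ht (pow_pos (half_pos hε) 2)
  let b₁ : ℤ → ℕ → ℕ → ℂ := fun m k j => if (m, k, j) ∈ S then b m k j else 0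
  have hle₁ : ∀ m (p : ℕ × ℕ), ‖b₁ m p.1 p.2‖ ^ 2 ≤ ‖b m p.1 p.2‖ ^ 2 := fun m p => by
    by_cases h : (m, p) ∈ S <;> simp [b₁, h]
  have heq₂ : ∀ m (p : ℕ × ℕ), ‖b m p.1 p.2 - b₁ m p.1 p.2‖ ^ 2 =
      if (m, p) ∈ S then 0 else ‖b m p.1 p.2‖ ^ 2 := fun m p => by
    by_cases h : (m, p) ∈ S <;> simp [b₁, h]
  have hs₁ : ∀ m, Summable fun p : ℕ × ℕ => ‖b₁ m p.1 p.2‖ ^ 2 := fun m =>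
    (hs m).of_nonneg_of_le (fun _ => sq_nonneg _) (hle₁ m)
  have hs₂ : ∀ m, Summable fun p : ℕ × ℕ => ‖b m p.1 p.2 - b₁ m p.1 p.2‖ ^ 2 := fun m => by
    refine (hs m).of_nonneg_of_le (fun _ => sq_nonneg _) fun p => ?_
    rw [heq₂]
    split_ifs
    · exact sq_nonneg _
    · exact le_rfl
  obtain ⟨T₁, hT₁⟩ := exists_block_clm (Real.sqrt_nonneg A) hs₁ fun m =>
    ((hs₁ m).tsum_le_tsum (hle₁ m) (hs m)).trans (hbound m)
  refine ⟨T₁, ?_, ?_⟩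
  · refine isCompactOperator_of_finite_support (S.image fun q => (q.1, q.2.1)) fun g p hp => ?_
    rw [hT₁]
    have hzero : ∀ j, b₁ p.1 p.2 j = 0 := fun j =>
      if_neg fun h => hp (Finset.mem_image.mpr ⟨_, h, rfl⟩)
    simp [hzero]
  · rw [dist_eq_norm]
    refine (ContinuousLinearMap.opNorm_le_bound (T - T₁) (half_pos hε).le fun g => ?_).trans_lt
      (half_lt_self hε)
    refine norm_le_of_block_apply (b := fun m k j => b m k j - b₁ m k j) (half_pos hε).le hs₂
      (fun m => ?_) fun p => ?_
    · simpa only [heq₂] using hS m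
    · rw [sub_apply, lp.coeFn_sub, Pi.sub_apply, hT, hT₁,
        ← (summable_block_mul hs g p.1 p.2).tsum_sub (summable_block_mul hs₁ g p.1 p.2)]
      simp only [sub_mul]

theorem Wt_natCast (w : ℕ → ℝ) (s k : ℕ) : Wt w (s : ℤ) k = w k := by simp [Wt]

theorem Wt_negSucc (w : ℕ → ℝ) (t k : ℕ) : Wt w (Int.negSucc t) k = w (k + t + 1) := by
  have h : (-Int.negSucc t).toNat = t + 1 := by omega
  rw [Wt, if_neg (by omega), h, add_assoc]

theorem Wt_neg_natCast (w : ℕ → ℝ) (t k : ℕ) : Wt w (-(t : ℤ)) k = w (k + t) := by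
  rcases t with _ | t
  · simp [Wt]
  · exact Wt_negSucc w t k

theorem Wt_pos {w : ℕ → ℝ} (hw : ∀ k, 0 < w k) (n : ℤ) (k : ℕ) : 0 < Wt w n k := by
  unfold Wt
  split_ifs <;> exact hw _

theorem ofReal_sqrt_Wt_ne_zero {w : ℕ → ℝ} (hw : ∀ k, 0 < w k) (n : ℤ) (k : ℕ) :
    (Real.sqrt (Wt w n k) : ℂ) ≠ 0 :=
  Complex.ofReal_ne_zero.mpr (Real.sqrt_pos.mpr (Wt_pos hw n k)).ne'

theorem Dop_natCast_add_one (β μ : ℕ → ℂ) (f : ℤ → ℕ → ℂ) (s k : ℕ) :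
    Dop β μ f ((s : ℤ) + 1) k =
      β (k + s) * f s k - β k * (μ (k + 1) / μ k) * f s (k + 1) := by
  simp [Dop]

theorem Dop_neg_natCast (β μ : ℕ → ℂ) (f : ℤ → ℕ → ℂ) (t k : ℕ) :
    Dop β μ f (-(t : ℤ)) k =
      β (k + t) * (μ (k + t + 1) / μ (k + t)) * f (Int.negSucc t) k -
        (if k = 0 then 0 else β (k - 1) * f (Int.negSucc t) (k - 1)) := by
  have h : (1 - -(t : ℤ)).toNat = t + 1 := by omega
  have h' : -(t : ℤ) - 1 = Int.negSucc t := by omega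
  have h'' : k + (t + 1) - 1 = k + t := by omega
  rw [Dop, if_neg (by omega), h, h', h'', add_assoc]

theorem mode_cases (n : ℤ) : (∃ s : ℕ, n = (s : ℤ) + 1) ∨ ∃ t : ℕ, n = -(t : ℤ) := by
  rcases lt_or_ge 0 n with h | h
  · exact .inl ⟨(n - 1).toNat, by omega⟩
  · exact .inr ⟨(-n).toNat, by omega⟩

theorem Dop_add (β μ : ℕ → ℂ) (f g : ℤ → ℕ → ℂ) :
    Dop β μ (f + g) = Dop β μ f + Dop β μ g := by
  ext n k
  simp only [Dop, Pi.add_apply]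
  split_ifs <;> ring

theorem Dop_smul (β μ : ℕ → ℂ) (z : ℂ) (f : ℤ → ℕ → ℂ) :
    Dop β μ (z • f) = z • Dop β μ f := by
  ext n k
  simp only [Dop, Pi.smul_apply, smul_eq_mul]
  split_ifs <;> ring

theorem Dop_hasSum (β μ : ℕ → ℂ) {F : ℕ → ℤ → ℕ → ℂ} {f : ℤ → ℕ → ℂ}
    (h : ∀ m k, HasSum (fun j => F j m k) (f m k)) (n : ℤ) (k : ℕ) :
    HasSum (fun j => Dop β μ (F j) n k) (Dop β μ f n k) := by
  unfold Dop
  split_ifs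
  · exact ((h _ _).mul_left _).sub ((h _ _).mul_left _)
  · exact ((h _ _).mul_left _).sub hasSum_zero
  · exact ((h _ _).mul_left _).sub ((h _ _).mul_left _)

theorem unrep_add (w : ℕ → ℝ) (φ ψ : ℤ × ℕ → ℂ) :
    unrep w (φ + ψ) = unrep w φ + unrep w ψ := by
  ext n k
  simp [unrep, add_div]

theorem unrep_smul (w : ℕ → ℝ) (z : ℂ) (φ : ℤ × ℕ → ℂ) :
    unrep w (z • φ) = z • unrep w φ := by
  ext n k
  simp [unrep, mul_div_assoc]

/-- The operator `D` on all of `H_w`, with values in arbitrary families of sequences. -/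
noncomputable def DopLinear (w : ℕ → ℝ) (β μ : ℕ → ℂ) : Ews →ₗ[ℂ] (ℤ → ℕ → ℂ) where
  toFun φ := Dop β μ (unrep w φ)
  map_add' φ ψ := by rw [lp.coeFn_add, unrep_add, Dop_add]
  map_smul' z φ := by rw [lp.coeFn_smul, unrep_smul, Dop_smul, RingHom.id_apply]

theorem DopLinear_apply (w : ℕ → ℝ) (β μ : ℕ → ℂ) (φ : Ews) :
    DopLinear w β μ φ = Dop β μ (unrep w φ) := rfl

/-- The product `β(k) β(k+1) ⋯ β(k+s-1)`. -/
def shiftProd (β : ℕ → ℂ) (s k : ℕ) : ℂ := ∏ i ∈ Finset.range s, β (k + i)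

theorem shiftProd_ne_zero {β : ℕ → ℂ} (hβ : ∀ k, β k ≠ 0) (s k : ℕ) : shiftProd β s k ≠ 0 :=
  Finset.prod_ne_zero_iff.mpr fun _ _ => hβ _

theorem mul_shiftProd_succ (β : ℕ → ℂ) (s k : ℕ) :
    β k * shiftProd β s (k + 1) = β (k + s) * shiftProd β s k := by
  have h : ∏ i ∈ Finset.range s, β (k + (i + 1)) = shiftProd β s (k + 1) :=
    Finset.prod_congr rfl fun i _ => by rw [add_right_comm, add_assoc]
  have := (Finset.prod_range_succ' (fun i => β (k + i)) s).symm.trans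
    (Finset.prod_range_succ (fun i => β (k + i)) s)
  rw [h, add_zero] at this
  rw [mul_comm, this, mul_comm]
  rfl

theorem pow_le_norm_shiftProd {β : ℕ → ℂ} {c : ℝ} (hc : 0 < c)
    (hβlow : ∀ k : ℕ, c * (1 + k) ≤ ‖β k‖) (s k : ℕ) :
    (c * (1 + k)) ^ s ≤ ‖shiftProd β s k‖ := by
  rw [shiftProd, norm_prod]
  calc (c * (1 + k)) ^ s = ∏ _i ∈ Finset.range s, c * (1 + (k : ℝ)) := by simp
    _ ≤ ∏ i ∈ Finset.range s, ‖β (k + i)‖ := by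
      refine Finset.prod_le_prod (fun _ _ => by positivity) fun i _ => le_trans ?_ (hβlow _)
      push_cast
      gcongr
      linarith [Nat.cast_nonneg (α := ℝ) i]

theorem norm_shiftProd_div_le {β : ℕ → ℂ} (hβ : ∀ k, β k ≠ 0) {M : ℝ}
    (hM : ∀ k j m : ℕ, k ≤ j →
      ‖∏ i ∈ Finset.range (m + 1), β (k + i)‖ ≤ M * ‖∏ i ∈ Finset.range (m + 1), β (j + i)‖)
    (s : ℕ) {k j : ℕ} (hkj : k ≤ j) : ‖shiftProd β s k / shiftProd β s j‖ ≤ M := by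
  have hpos : ∀ s j, 0 < ‖shiftProd β s j‖ := fun s j => norm_pos_iff.mpr (shiftProd_ne_zero hβ s j)
  rcases s with _ | s
  · have h := hM 0 0 0 le_rfl
    have h1 := hpos 1 0
    simp only [shiftProd, Finset.range_zero, Finset.prod_empty, div_one, norm_one] at *
    nlinarith
  · rw [norm_div, div_le_iff₀ (hpos _ _)]
    exact hM k j s hkj

/-- The integral kernel of the right inverse of `D`, mode by mode. -/
noncomputable def invKernel (β μ : ℕ → ℂ) : ℤ → ℕ → ℕ → ℂ
  | Int.ofNat s, k, j =>
    if k ≤ j then shiftProd β s k / shiftProd β s j * (μ j / μ k) / β (j + s) else 0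
  | Int.negSucc t, k, j =>
    if j ≤ k then shiftProd β t j / shiftProd β t k * (μ (j + t) / μ (k + t + 1)) / β (k + t)
    else 0

theorem invKernel_natCast (β μ : ℕ → ℂ) (s k j : ℕ) : invKernel β μ (s : ℤ) k j =
    if k ≤ j then shiftProd β s k / shiftProd β s j * (μ j / μ k) / β (j + s) else 0 := rfl

theorem invKernel_negSucc (β μ : ℕ → ℂ) (t k j : ℕ) : invKernel β μ (Int.negSucc t) k j =
    if j ≤ k then shiftProd β t j / shiftProd β t k * (μ (j + t) / μ (k + t + 1)) / β (k + t)
    else 0 := rfl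

theorem Dop_invKernel {β μ : ℕ → ℂ} (hβ : ∀ k, β k ≠ 0) (hμ : ∀ k, μ k ≠ 0) (j : ℕ) (n : ℤ)
    (k : ℕ) : Dop β μ (fun m k => invKernel β μ m k j) n k = if j = k then 1 else 0 := by
  have hP := shiftProd_ne_zero hβ
  rcases mode_cases n with ⟨s, rfl⟩ | ⟨t, rfl⟩
  · rw [Dop_natCast_add_one, invKernel_natCast, invKernel_natCast]
    have := hβ (j + s)
    have := hμ j
    have := hμ k
    have := hμ (k + 1)
    have := hP s j
    rcases lt_trichotomy j k with h | rfl | h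
    · rw [if_neg (by omega), if_neg (by omega), if_neg (by omega)]
      ring
    · rw [if_pos le_rfl, if_neg (by omega), if_pos rfl]
      field_simp
      ring
    · rw [if_pos h.le, if_pos (by omega), if_neg (by omega)]
      have hrec := mul_shiftProd_succ β s k
      field_simp
      linear_combination (-μ j) * hrec
  · rw [Dop_neg_natCast]
    have hdiag : ∀ k, β (k + t) * (μ (k + t + 1) / μ (k + t)) *
        invKernel β μ (Int.negSucc t) k k = 1 := fun k => by
      have := hβ (k + t)
      have := hμ (k + t)
      have := hμ (k + t + 1)
      have := hP t k
      rw [invKernel_negSucc, if_pos le_rfl]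
      field_simp
    have hzero : ∀ {k}, k < j → invKernel β μ (Int.negSucc t) k j = 0 := fun {k} h => by
      rw [invKernel_negSucc, if_neg (by omega)]
    rcases k with _ | l
    · rcases Nat.eq_zero_or_pos j with rfl | h
      · simpa using hdiag 0
      · simp [hzero h, h.ne']
    · rw [if_neg (Nat.succ_ne_zero l), Nat.add_sub_cancel]
      rcases lt_trichotomy j (l + 1) with h | rfl | h
      · have hl : l + 1 + t = l + t + 1 := by omega
        have := hP t l
        have := hP t (l + 1)
        have := hβ (l + t)
        have := hβ (l + t + 1)
        have := hμ (l + t + 1)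
        have := hμ (l + t + 1 + 1)
        have hrec := mul_shiftProd_succ β t l
        rw [invKernel_negSucc, invKernel_negSucc, if_pos h.le, if_pos (Nat.lt_succ_iff.mp h),
          if_neg h.ne, hl]
        field_simp
        linear_combination (-(shiftProd β t j * μ (j + t))) * hrec
      · rw [hdiag, hzero (Nat.lt_succ_self l), if_pos rfl]
        ring
      · rw [hzero h, hzero (by omega), if_neg h.ne']
        ring

/-- The kernel of the right inverse of `D` between the weighted representatives. -/
noncomputable def wtKernel (w w' : ℕ → ℝ) (β μ : ℕ → ℂ) (m : ℤ) (k j : ℕ) : ℂ :=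
  (Real.sqrt (Wt w m k) : ℂ) * invKernel β μ m k j / (Real.sqrt (Wt w' (m + 1) j) : ℂ)

theorem norm_sq_wtKernel {w w' : ℕ → ℝ} (hw : ∀ k, 0 < w k) (hw' : ∀ k, 0 < w' k)
    (β μ : ℕ → ℂ) (m : ℤ) (k j : ℕ) :
    ‖wtKernel w w' β μ m k j‖ ^ 2 =
      ‖invKernel β μ m k j‖ ^ 2 * (Wt w m k / Wt w' (m + 1) j) := by
  rw [wtKernel, norm_div, norm_mul, Complex.norm_real, Complex.norm_real,
    Real.norm_of_nonneg (Real.sqrt_nonneg _), Real.norm_of_nonneg (Real.sqrt_nonneg _), div_pow,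
    mul_pow, Real.sq_sqrt (Wt_pos hw _ _).le, Real.sq_sqrt (Wt_pos hw' _ _).le]
  ring

/-- The dominating double sequence of the summability hypothesis. -/
noncomputable def majorant (w w' : ℕ → ℝ) (μ : ℕ → ℂ) (p : ℕ × ℕ) : ℝ :=
  ((max p.2 p.1 : ℝ) + 1)⁻¹ ^ 2 * ‖μ p.2 / μ p.1‖ ^ 2 * (w p.1 / w' p.2)

theorem majorant_nonneg {w w' : ℕ → ℝ} (hw : ∀ k, 0 < w k) (hw' : ∀ k, 0 < w' k)
    (μ : ℕ → ℂ) (p : ℕ × ℕ) : 0 ≤ majorant w w' μ p := by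
  have := hw p.1
  have := hw' p.2
  unfold majorant
  positivity

theorem norm_sq_wtKernel_natCast_le {w w' : ℕ → ℝ} (hw : ∀ k, 0 < w k) (hw' : ∀ k, 0 < w' k)
    {β : ℕ → ℂ} (μ : ℕ → ℂ) {c M : ℝ} (hc : 0 < c) (hβlow : ∀ k : ℕ, c * (1 + k) ≤ ‖β k‖)
    (hP : ∀ (s : ℕ) {k j : ℕ}, k ≤ j → ‖shiftProd β s k / shiftProd β s j‖ ≤ M) (s : ℕ)
    (p : ℕ × ℕ) :
    ‖wtKernel w w' β μ s p.1 p.2‖ ^ 2 ≤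
      (M / c) ^ 2 * (((1 + p.2 : ℝ) / (1 + p.2 + s)) ^ 2 * majorant w w' μ p) := by
  obtain ⟨k, j⟩ := p
  have h0 := majorant_nonneg hw hw' μ (k, j)
  rw [norm_sq_wtKernel hw hw', Wt_natCast, show ((s : ℤ) + 1) = ((s + 1 : ℕ) : ℤ) by simp,
    Wt_natCast, invKernel_natCast]
  dsimp only
  split_ifs with hkj
  · have hM0 : 0 ≤ M := (norm_nonneg _).trans (hP s hkj)
    have hmax : max (j : ℝ) k = j := max_eq_left (by exact_mod_cast hkj)
    have hβ' : c * (1 + j + s) ≤ ‖β (j + s)‖ := by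
      have := hβlow (j + s)
      push_cast at this
      linarith
    have hnorm : ‖shiftProd β s k / shiftProd β s j * (μ j / μ k) / β (j + s)‖ ≤
        M * ‖μ j / μ k‖ / (c * (1 + j + s)) := by
      rw [norm_div, norm_mul]
      gcongr
      exact hP s hkj
    have hww : 0 ≤ w k / w' j := (div_pos (hw k) (hw' j)).le
    calc _ ≤ (M * ‖μ j / μ k‖ / (c * (1 + j + s))) ^ 2 * (w k / w' j) := by gcongr
      _ = _ := by
        simp only [majorant, hmax]
        generalize ‖μ j / μ k‖ = x
        generalize w k / w' j = y
        have : (1 + j : ℝ) ≠ 0 := by positivity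
        have : (1 + j + s : ℝ) ≠ 0 := by positivity
        rw [add_comm (j : ℝ) 1]
        field_simp
  · rw [norm_zero]
    have : 0 ≤ (M / c) ^ 2 * (((1 + j : ℝ) / (1 + j + s)) ^ 2 * majorant w w' μ (k, j)) := by
      positivity
    simpa using this

theorem norm_sq_wtKernel_negSucc_le {w w' : ℕ → ℝ} (hw : ∀ k, 0 < w k) (hw' : ∀ k, 0 < w' k)
    {β : ℕ → ℂ} (μ : ℕ → ℂ) {c M : ℝ} (hc : 0 < c) (hβlow : ∀ k : ℕ, c * (1 + k) ≤ ‖β k‖)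
    (hP : ∀ (s : ℕ) {k j : ℕ}, k ≤ j → ‖shiftProd β s k / shiftProd β s j‖ ≤ M) (t : ℕ)
    (p : ℕ × ℕ) :
    ‖wtKernel w w' β μ (Int.negSucc t) p.1 p.2‖ ^ 2 ≤
      4 * (M / c) ^ 2 * majorant w w' μ (p.1 + t + 1, p.2 + t) := by
  obtain ⟨k, j⟩ := p
  have h0 := majorant_nonneg hw hw' μ (k + t + 1, j + t)
  rw [norm_sq_wtKernel hw hw', Wt_negSucc, show Int.negSucc t + 1 = -(t : ℤ) by omega,
    Wt_neg_natCast, invKernel_negSucc]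
  dsimp only
  split_ifs with hjk
  · have hM0 : 0 ≤ M := (norm_nonneg _).trans (hP t hjk)
    have hmax : max ((j + t : ℕ) : ℝ) ((k + t + 1 : ℕ) : ℝ) = k + t + 1 := by
      rw [max_eq_right (by exact_mod_cast (by omega : j + t ≤ k + t + 1))]
      push_cast
      ring
    have hβ' : c * (k + t + 1) ≤ ‖β (k + t)‖ := by
      have := hβlow (k + t)
      push_cast at this
      linarith
    have hnorm : ‖shiftProd β t j / shiftProd β t k * (μ (j + t) / μ (k + t + 1)) / β (k + t)‖ ≤
        M * ‖μ (j + t) / μ (k + t + 1)‖ / (c * (k + t + 1)) := by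
      rw [norm_div, norm_mul]
      gcongr
      exact hP t hjk
    have hww : 0 ≤ w (k + t + 1) / w' (j + t) := (div_pos (hw _) (hw' _)).le
    have hinv : ((k : ℝ) + t + 1)⁻¹ ≤ 2 * ((k : ℝ) + t + 1 + 1)⁻¹ := by
      rw [← div_eq_mul_inv, inv_eq_one_div, div_le_div_iff₀ (by positivity) (by positivity)]
      linarith [Nat.cast_nonneg (α := ℝ) k, Nat.cast_nonneg (α := ℝ) t]
    calc _ ≤ (M * ‖μ (j + t) / μ (k + t + 1)‖ / (c * (k + t + 1))) ^ 2 *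
          (w (k + t + 1) / w' (j + t)) := by gcongr
      _ = (M / c) ^ 2 * (((k : ℝ) + t + 1)⁻¹ ^ 2 * ‖μ (j + t) / μ (k + t + 1)‖ ^ 2 *
          (w (k + t + 1) / w' (j + t))) := by
        generalize w (k + t + 1) / w' (j + t) = y
        field_simp
      _ ≤ (M / c) ^ 2 * ((2 * ((k : ℝ) + t + 1 + 1)⁻¹) ^ 2 * ‖μ (j + t) / μ (k + t + 1)‖ ^ 2 *
          (w (k + t + 1) / w' (j + t))) := by gcongr
      _ = _ := by
        simp only [majorant, hmax]
        ring
  · rw [norm_zero]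
    have : 0 ≤ 4 * (M / c) ^ 2 * majorant w w' μ (k + t + 1, j + t) := by positivity
    simpa using this

theorem tendsto_tsum_damped_zero {a : ℕ × ℕ → ℝ} (ha0 : ∀ p, 0 ≤ a p) (ha : Summable a) :
    Filter.Tendsto (fun s : ℕ => ∑' p : ℕ × ℕ, ((1 + p.2 : ℝ) / (1 + p.2 + s)) ^ 2 * a p)
      Filter.atTop (nhds 0) := by
  have h := tendsto_tsum_of_dominated_convergence (𝓕 := Filter.atTop)
    (f := fun (s : ℕ) (p : ℕ × ℕ) => ((1 + p.2 : ℝ) / (1 + p.2 + s)) ^ 2 * a p)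
    (g := fun _ => 0) ha (fun p => ?_) (Filter.Eventually.of_forall fun s p => ?_)
  · simpa using h
  · have hden : Filter.Tendsto (fun s : ℕ => (1 + p.2 : ℝ) + s) Filter.atTop Filter.atTop :=
      Filter.tendsto_atTop_add_const_left _ _ tendsto_natCast_atTop_atTop
    simpa using ((hden.const_div_atTop (1 + p.2 : ℝ)).pow 2).mul_const (a p)
  · have h1 : ((1 + p.2 : ℝ) / (1 + p.2 + s)) ^ 2 ≤ 1 :=
      pow_le_one₀ (by positivity)
        (div_le_one_of_le₀ (by linarith [Nat.cast_nonneg (α := ℝ) s]) (by positivity))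
    rw [Real.norm_of_nonneg (mul_nonneg (by positivity) (ha0 p))]
    exact mul_le_of_le_one_left (ha0 p) h1

theorem tendsto_tsum_shifted_zero {a : ℕ × ℕ → ℝ} (ha0 : ∀ p, 0 ≤ a p) (ha : Summable a) :
    Filter.Tendsto (fun t : ℕ => ∑' p : ℕ × ℕ, a (p.1 + t + 1, p.2 + t))
      Filter.atTop (nhds 0) := by
  have h := tendsto_tsum_of_dominated_convergence (𝓕 := Filter.atTop)
    (f := fun (t : ℕ) (p : ℕ × ℕ) => if t < p.1 then a p else 0)
    (g := fun _ => 0) ha (fun p => ?_) (Filter.Eventually.of_forall fun t p => ?_)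
  · rw [tsum_zero] at h
    refine squeeze_zero (fun t => tsum_nonneg fun _ => ha0 _) (fun t => ?_) h
    have hinj : Function.Injective fun p : ℕ × ℕ => (p.1 + t + 1, p.2 + t) := fun p q hpq => by
      simp only [Prod.mk.injEq] at hpq
      ext <;> omega
    have hs : Summable fun p : ℕ × ℕ => if t < p.1 then a p else 0 :=
      ha.of_nonneg_of_le (fun p => by split_ifs <;> simp [ha0]) fun p => by
        split_ifs <;> simp [ha0]
    refine (ha.comp_injective hinj).tsum_le_tsum_of_inj _ hinj
      (fun p _ => by split_ifs <;> simp [ha0]) (fun p => ?_) hs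
    rw [if_pos (by omega)]
  · refine tendsto_const_nhds.congr' ?_
    filter_upwards [Filter.eventually_ge_atTop p.1] with t ht
    rw [if_neg (by omega)]
  · split_ifs
    · rw [Real.norm_of_nonneg (ha0 p)]
    · simpa using ha0 p

theorem tendsto_cofinite_int {f : ℤ → ℝ} {l : Filter ℝ}
    (h₁ : Filter.Tendsto (fun s : ℕ => f s) Filter.atTop l)
    (h₂ : Filter.Tendsto (fun t : ℕ => f (Int.negSucc t)) Filter.atTop l) :
    Filter.Tendsto f Filter.cofinite l := by
  rw [← Nat.cofinite_eq_atTop] at h₁ h₂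
  intro U hU
  have h1 : {s : ℕ | ¬ f s ∈ U}.Finite := h₁ hU
  have h2 : {t : ℕ | ¬ f (Int.negSucc t) ∈ U}.Finite := h₂ hU
  refine ((h1.image fun s : ℕ => (s : ℤ)).union (h2.image Int.negSucc)).subset fun m hm => ?_
  rcases m with s | t
  · exact .inl ⟨s, hm, rfl⟩
  · exact .inr ⟨t, hm, rfl⟩

theorem exists_compact_right_inverse {w w' : ℕ → ℝ} (hw : ∀ k, 0 < w k) (hw' : ∀ k, 0 < w' k)
    {β μ : ℕ → ℂ} (hβ : ∀ k, β k ≠ 0) (hμ : ∀ k, μ k ≠ 0) {c M : ℝ} (hc : 0 < c)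
    (hβlow : ∀ k : ℕ, c * (1 + k) ≤ ‖β k‖)
    (hP : ∀ (s : ℕ) {k j : ℕ}, k ≤ j → ‖shiftProd β s k / shiftProd β s j‖ ≤ M)
    (hsum : Summable (majorant w w' μ)) :
    ∃ Q : Ews →L[ℂ] Ews, IsCompactOperator Q ∧ ∀ (g : Ews) (p : ℤ × ℕ),
      (Real.sqrt (Wt w' p.1 p.2) : ℂ) * Dop β μ (unrep w (Q g)) p.1 p.2 = g p := by
  have ha0 := majorant_nonneg hw hw' μ
  have hb₁ := norm_sq_wtKernel_natCast_le hw hw' μ hc hβlow hP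
  have hb₂ := norm_sq_wtKernel_negSucc_le hw hw' μ hc hβlow hP
  have hd₁ : ∀ s : ℕ, Summable fun p : ℕ × ℕ =>
      (M / c) ^ 2 * (((1 + p.2 : ℝ) / (1 + p.2 + s)) ^ 2 * majorant w w' μ p) := fun s => by
    refine Summable.mul_left _ (hsum.of_nonneg_of_le
      (fun p => mul_nonneg (by positivity) (ha0 p)) fun p => mul_le_of_le_one_left (ha0 p) ?_)
    exact pow_le_one₀ (by positivity)
      (div_le_one_of_le₀ (by linarith [Nat.cast_nonneg (α := ℝ) s]) (by positivity))
  have hd₂ : ∀ t : ℕ, Summable fun p : ℕ × ℕ =>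
      4 * (M / c) ^ 2 * majorant w w' μ (p.1 + t + 1, p.2 + t) := fun t => by
    refine Summable.mul_left _ (hsum.comp_injective
      (i := fun p : ℕ × ℕ => (p.1 + t + 1, p.2 + t)) fun p q hpq => ?_)
    simp only [Prod.mk.injEq] at hpq
    ext <;> omega
  have hs₁ : ∀ s : ℕ, Summable fun p : ℕ × ℕ => ‖wtKernel w w' β μ s p.1 p.2‖ ^ 2 := fun s =>
    (hd₁ s).of_nonneg_of_le (fun _ => sq_nonneg _) (hb₁ s)
  have hs₂ : ∀ t : ℕ, Summable fun p : ℕ × ℕ =>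
      ‖wtKernel w w' β μ (Int.negSucc t) p.1 p.2‖ ^ 2 := fun t =>
    (hd₂ t).of_nonneg_of_le (fun _ => sq_nonneg _) (hb₂ t)
  have hs : ∀ m, Summable fun p : ℕ × ℕ => ‖wtKernel w w' β μ m p.1 p.2‖ ^ 2
    | Int.ofNat s => hs₁ s
    | Int.negSucc t => hs₂ t
  have ht : Filter.Tendsto (fun m => ∑' p : ℕ × ℕ, ‖wtKernel w w' β μ m p.1 p.2‖ ^ 2)
      Filter.cofinite (nhds 0) := by
    refine tendsto_cofinite_int ?_ ?_
    · refine squeeze_zero (fun s => tsum_nonneg fun _ => sq_nonneg _)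
        (fun s => (hs₁ s).tsum_le_tsum (hb₁ s) (hd₁ s)) ?_
      simpa only [tsum_mul_left, mul_zero] using
        (tendsto_tsum_damped_zero ha0 hsum).const_mul ((M / c) ^ 2)
    · refine squeeze_zero (fun t => tsum_nonneg fun _ => sq_nonneg _)
        (fun t => (hs₂ t).tsum_le_tsum (hb₂ t) (hd₂ t)) ?_
      simpa only [tsum_mul_left, mul_zero] using
        (tendsto_tsum_shifted_zero ha0 hsum).const_mul (4 * (M / c) ^ 2)
  obtain ⟨Q, hQc, hQ⟩ := exists_compact_block_clm hs ht
  refine ⟨Q, hQc, fun g p => ?_⟩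
  have hrep : ∀ m k, HasSum (fun j => unrep w' g (m + 1) j * invKernel β μ m k j)
      (unrep w (Q g) m k) := fun m k => by
    have h := (summable_block_mul hs g m k).hasSum.div_const (Real.sqrt (Wt w m k) : ℂ)
    rw [← hQ g (m, k)] at h
    have heq : (fun j => unrep w' g (m + 1) j * invKernel β μ m k j) = fun j =>
        wtKernel w w' β μ m k j * g (m + 1, j) / (Real.sqrt (Wt w m k) : ℂ) := funext fun j => by
      have := ofReal_sqrt_Wt_ne_zero hw m k
      rw [wtKernel, unrep]
      field_simp
    rw [heq]
    exact h
  have hD : ∀ j, Dop β μ (fun m k => unrep w' g (m + 1) j * invKernel β μ m k j) p.1 p.2 =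
      if j = p.2 then unrep w' g p.1 p.2 else 0 := fun j => by
    trans unrep w' g p.1 j * Dop β μ (fun m k => invKernel β μ m k j) p.1 p.2
    · simp only [Dop, sub_add_cancel]
      split_ifs <;> ring
    · rw [Dop_invKernel hβ hμ, mul_ite, mul_one, mul_zero]
      split_ifs with h
      · rw [h]
      · rfl
  have hsumD := Dop_hasSum β μ hrep p.1 p.2
  simp only [hD] at hsumD
  rw [hsumD.unique (hasSum_ite_eq p.2 (unrep w' g p.1 p.2)), unrep,
    mul_div_cancel₀ _ (ofReal_sqrt_Wt_ne_zero hw' _ _)]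

theorem mode_eq_zero_of_Dop_eq_zero {β μ : ℕ → ℂ} (hβ : ∀ k, β k ≠ 0) (hμ : ∀ k, μ k ≠ 0)
    {f : ℤ → ℕ → ℂ} (hf : Dop β μ f = 0) (t k : ℕ) : f (Int.negSucc t) k = 0 := by
  have hne : ∀ k, β (k + t) * (μ (k + t + 1) / μ (k + t)) ≠ 0 := fun k =>
    mul_ne_zero (hβ _) (div_ne_zero (hμ _) (hμ _))
  have hD : ∀ k, Dop β μ f (-(t : ℤ)) k = 0 := fun k => by rw [hf]; rfl
  induction k with
  | zero =>
    have h := hD 0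
    rw [Dop_neg_natCast, if_pos rfl, sub_zero] at h
    exact (mul_eq_zero.mp h).resolve_left (hne 0)
  | succ k ih =>
    have h := hD (k + 1)
    rw [Dop_neg_natCast, if_neg (Nat.succ_ne_zero k), Nat.add_sub_cancel, ih, mul_zero,
      sub_zero] at h
    exact (mul_eq_zero.mp h).resolve_left (hne (k + 1))

theorem mode_eq_of_Dop_eq_zero {β μ : ℕ → ℂ} (hβ : ∀ k, β k ≠ 0) (hμ : ∀ k, μ k ≠ 0)
    (hμ0 : μ 0 = 1) {f : ℤ → ℕ → ℂ} (hf : Dop β μ f = 0) (s k : ℕ) :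
    f s k = f s 0 * (shiftProd β s k / (shiftProd β s 0 * μ k)) := by
  have hP0 := shiftProd_ne_zero hβ s 0
  induction k with
  | zero =>
    rw [hμ0]
    field_simp
  | succ k ih =>
    have h : Dop β μ f ((s : ℤ) + 1) k = 0 := by rw [hf]; rfl
    have hrec := mul_shiftProd_succ β s k
    have := hβ k
    have := hμ k
    have := hμ (k + 1)
    rw [Dop_natCast_add_one, ih] at h
    have hne : β k * (μ (k + 1) / μ k) ≠ 0 := mul_ne_zero (hβ k) (div_ne_zero (hμ _) (hμ _))
    refine mul_left_cancel₀ hne ((sub_eq_zero.mp h).symm.trans ?_)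
    field_simp
    linear_combination (-f s 0) * hrec

theorem mode_zero_eq_zero_of_not_summable {w : ℕ → ℝ} (hw : ∀ k, 0 < w k) {β μ : ℕ → ℂ}
    (hβ : ∀ k, β k ≠ 0) (hμ : ∀ k, μ k ≠ 0) (hμ0 : μ 0 = 1) {c : ℝ} (hc : 0 < c)
    (hβlow : ∀ k : ℕ, c * (1 + k) ≤ ‖β k‖) {s : ℕ}
    (hN : ¬ Summable fun k : ℕ => (1 + (k : ℝ)) ^ (2 * s) * ‖μ k‖⁻¹ ^ 2 * w k) {φ : Ews}
    (hφ : Dop β μ (unrep w φ) = 0) : unrep w φ s 0 = 0 := by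
  by_contra hne
  refine hN ?_
  have hsq : Summable fun k => ‖φ ((s : ℤ), k)‖ ^ 2 := φ.hasSum_norm_sq.summable.prod_factor s
  set z := unrep w φ s 0
  have hz : 0 < ‖z‖ := norm_pos_iff.mpr hne
  have hP0 : 0 < ‖shiftProd β s 0‖ := norm_pos_iff.mpr (shiftProd_ne_zero hβ s 0)
  refine (hsq.mul_left ((‖shiftProd β s 0‖ / (c ^ s * ‖z‖)) ^ 2)).of_nonneg_of_le
    (fun k => mul_nonneg (by positivity) (hw k).le) fun k => ?_
  have hμk : 0 < ‖μ k‖ := norm_pos_iff.mpr (hμ k)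
  have hsqrt := ofReal_sqrt_Wt_ne_zero hw (s : ℤ) k
  have hval : φ ((s : ℤ), k) =
      z * (shiftProd β s k / (shiftProd β s 0 * μ k)) * (Real.sqrt (Wt w s k) : ℂ) := by
    rw [← mode_eq_of_Dop_eq_zero hβ hμ hμ0 hφ s k, unrep, div_mul_cancel₀ _ hsqrt]
  have hnorm : ‖φ ((s : ℤ), k)‖ ^ 2 =
      (‖z‖ * (‖shiftProd β s k‖ / (‖shiftProd β s 0‖ * ‖μ k‖))) ^ 2 * w k := by
    rw [hval, norm_mul, norm_mul, norm_div, norm_mul, Complex.norm_real,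
      Real.norm_of_nonneg (Real.sqrt_nonneg _), mul_pow, Real.sq_sqrt (Wt_pos hw _ _).le,
      Wt_natCast]
  have hlow := pow_le_norm_shiftProd hc hβlow s k
  have hwk := hw k
  rw [hnorm]
  calc (1 + (k : ℝ)) ^ (2 * s) * ‖μ k‖⁻¹ ^ 2 * w k
      = ((c * (1 + (k : ℝ))) ^ s / (c ^ s * ‖μ k‖)) ^ 2 * w k := by
        rw [mul_pow]
        field_simp
        ring
    _ ≤ (‖shiftProd β s k‖ / (c ^ s * ‖μ k‖)) ^ 2 * w k := by gcongr
    _ = _ := by field_simp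

theorem finiteDimensional_ker_DopLinear {w : ℕ → ℝ} (hw : ∀ k, 0 < w k) {β μ : ℕ → ℂ}
    (hβ : ∀ k, β k ≠ 0) (hμ : ∀ k, μ k ≠ 0) (hμ0 : μ 0 = 1) {c : ℝ} (hc : 0 < c)
    (hβlow : ∀ k : ℕ, c * (1 + k) ≤ ‖β k‖) {N : ℕ}
    (hN : ∀ n, N ≤ n → ¬ Summable fun k : ℕ => (1 + (k : ℝ)) ^ (2 * n) * ‖μ k‖⁻¹ ^ 2 * w k) :
    FiniteDimensional ℂ (DopLinear w β μ).ker := by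
  let e : (DopLinear w β μ).ker →ₗ[ℂ] (Fin N → ℂ) :=
    LinearMap.pi fun i => (lp.evalCLM ℂ (fun _ : ℤ × ℕ => ℂ) 2 ((i : ℕ), 0)).toLinearMap.comp
      (DopLinear w β μ).ker.subtype
  refine FiniteDimensional.of_injective e ((injective_iff_map_eq_zero e).mpr fun φ hφ => ?_)
  have hD : Dop β μ (unrep w φ.1) = 0 := φ.2
  have hf : ∀ n k, unrep w φ.1 n k = 0 := by
    rintro (s | t) k
    · have h0 : unrep w φ.1 s 0 = 0 := by
        rcases lt_or_ge s N with hs | hs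
        · have : φ.1 ((s : ℤ), 0) = 0 := congrFun hφ ⟨s, hs⟩
          rw [unrep, this, zero_div]
        · exact mode_zero_eq_zero_of_not_summable hw hβ hμ hμ0 hc hβlow (hN s hs) hD
      exact (mode_eq_of_Dop_eq_zero hβ hμ hμ0 hD s k).trans (by rw [h0, zero_mul])
    · exact mode_eq_zero_of_Dop_eq_zero hβ hμ hD t k
  ext p
  exact (div_eq_zero_iff.mp (hf p.1 p.2)).resolve_right (ofReal_sqrt_Wt_ne_zero hw _ _)

/-- Theorem 3.1: under assumptions (a) `|β(k)| ≥ c(1+k)` with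
`c > 0`; (b) `|∏_{i≤m} β(k+i)| ≤ M |∏_{i≤m} β(j+i)|` for `k ≤ j`;
(c) `Σ_{k,j} (max(j,k)+1)^{−2}|μ(j)/μ(k)|² w(k)/w'(j) < ∞`;
(d) there is `N ≥ 0` with `Σ_k (1+k)^{2n}|μ(k)|^{−2} w(k) < ∞` for `n < N` and
`= ∞` for `n ≥ N`; and (e) `Σ_k |β(k) − β(k)μ(k+1)/μ(k)|² w'(k) < ∞`, the
operator `D : H_w ⊇ dom(D) → H_{w'}`, `(Df)_{n+1} = D_n f_n`, has a compact
parametrix: there is a compact `Q : H_{w'} → H_w` with `DQ = I` on `H_{w'}` and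
`QD = I − C` on `dom(D) = {f ∈ H_w : Df ∈ H_{w'}}`, `C` compact.  Here `H_w` is
identified isometrically with `ℓ²(ℤ × ℕ)` via `φ(n,k) = √(Wt w n k) f_n(k)`. -/
theorem statement12 (w w' : ℕ → ℝ) (hw : ∀ k, 0 < w k) (hw' : ∀ k, 0 < w' k)
    (hwsum : ∑' k : ℕ, w k = 1) (hw'sum : ∑' k : ℕ, w' k = 1)
    (β μ : ℕ → ℂ) (hβ : ∀ k, β k ≠ 0) (hμ : ∀ k, μ k ≠ 0) (hμ0 : μ 0 = 1)
    (c : ℝ) (hc : 0 < c) (hβlow : ∀ k : ℕ, c * (1 + k) ≤ ‖β k‖)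
    (M : ℝ)
    (hM : ∀ k j m : ℕ, k ≤ j →
      ‖∏ i ∈ Finset.range (m + 1), β (k + i)‖ ≤
        M * ‖∏ i ∈ Finset.range (m + 1), β (j + i)‖)
    (hsum : Summable fun p : ℕ × ℕ =>
      ((max p.2 p.1 : ℝ) + 1)⁻¹ ^ 2 * ‖μ p.2 / μ p.1‖ ^ 2 * (w p.1 / w' p.2))
    (N : ℕ)
    (hN : ∀ n : ℕ,
      (n < N → Summable fun k : ℕ => (1 + (k : ℝ)) ^ (2 * n) * ‖μ k‖⁻¹ ^ 2 * w k) ∧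
      (N ≤ n → ¬ Summable fun k : ℕ => (1 + (k : ℝ)) ^ (2 * n) * ‖μ k‖⁻¹ ^ 2 * w k))
    (hcov : Summable fun k : ℕ => ‖β k - β k * (μ (k + 1) / μ k)‖ ^ 2 * w' k) :
    ∃ Q C : Ews →L[ℂ] Ews, IsCompactOperator Q ∧ IsCompactOperator C ∧
      -- `DQ = I` on `H_{w'}`:
      (∀ g : Ews, ∀ p : ℤ × ℕ,
        (Real.sqrt (Wt w' p.1 p.2) : ℂ) * Dop β μ (unrep w (Q g)) p.1 p.2 = g p) ∧
      -- `QD = I − C` on the maximal domain of `D`: if `φ ∈ H_w` and its image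
      -- under `D` is represented by some `ψ ∈ H_{w'}`, then `Q ψ = φ − C φ`.
      (∀ φ ψ : Ews,
        (∀ p : ℤ × ℕ,
          ψ p = (Real.sqrt (Wt w' p.1 p.2) : ℂ) * Dop β μ (unrep w φ) p.1 p.2) →
        Q ψ = φ - C φ) := by
  have hP : ∀ (s : ℕ) {k j : ℕ}, k ≤ j → ‖shiftProd β s k / shiftProd β s j‖ ≤ M :=
    fun s _ _ hkj => norm_shiftProd_div_le hβ hM s hkj
  obtain ⟨Q₀, hQ₀, hDQ₀⟩ := exists_compact_right_inverse hw hw' hβ hμ hc hβlow hP hsum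
  set K := (DopLinear w β μ).ker
  have hK : FiniteDimensional ℂ K :=
    finiteDimensional_ker_DopLinear hw hβ hμ hμ0 hc hβlow fun n => (hN n).2
  have hDproj : ∀ φ : Ews, Dop β μ (unrep w (φ - K.starProjection φ : Ews)) =
      Dop β μ (unrep w φ) := fun φ => by
    have hmem : DopLinear w β μ (K.starProjection φ) = 0 := K.starProjection_apply_mem φ
    rw [← DopLinear_apply, map_sub, hmem, sub_zero, DopLinear_apply]
  refine ⟨Q₀ - K.starProjection ∘L Q₀, K.starProjection, ?_, ?_, ?_, ?_⟩
  · exact IsCompactOperator.sub (g := fun g => K.starProjection (Q₀ g)) hQ₀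
      (hQ₀.clm_comp K.starProjection)
  · exact (isCompactOperator_id (E := K)).comp_clm K.orthogonalProjectionOnto |>.clm_comp K.subtypeL
  · intro g p
    rw [← hDQ₀ g p, ← hDproj (Q₀ g)]
    rfl
  · intro φ ψ hψ
    have hker : Q₀ ψ - φ ∈ K := by
      have heq : Dop β μ (unrep w (Q₀ ψ)) = Dop β μ (unrep w φ) := by
        ext n k
        exact mul_left_cancel₀ (ofReal_sqrt_Wt_ne_zero hw' n k)
          ((hDQ₀ ψ (n, k)).trans (hψ (n, k)))
      rw [LinearMap.mem_ker, map_sub, DopLinear_apply, DopLinear_apply, heq, sub_self]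
    have hproj := Submodule.starProjection_eq_self_iff.mpr hker
    rw [map_sub] at hproj
    change Q₀ ψ - K.starProjection (Q₀ ψ) = φ - K.starProjection φ
    rw [sub_eq_sub_iff_sub_eq_sub, hproj]
end
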